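/- arXiv:1801.08775 — 4 statements merged into one kernel-verified Lean document; each statement's English description precedes it below -/
import Mathlib

section
/- Let f be an expansive homeomorphism of a compact metric space (M,d) with expansivity constant ξ, where d is self-similar for f with expanding factor λ > 1 and constant ξ. If X ⊆ M is an unstable set (diam(fⁿ(X)) → 0 as n → −∞), then the upper capacity ucap(X,d) exists and ucap(X,d) = ent⁺(X)/log(λ) = ent(X)/log(λ). If Y ⊆ M is a stable set (diam(fⁿ(Y)) → 0 as n → +∞), then ucap(Y,d) = ent⁻(Y)/log(λ) = ent(Y)/log(λ). -/
open Filter Topology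

/-- Diameter of a set with respect to an arbitrary "metric" `ρ`. -/
noncomputable def rdiam {M : Type*} (ρ : M → M → ℝ) (A : Set M) : ℝ :=
  sSup {r : ℝ | ∃ a ∈ A, ∃ b ∈ A, r = ρ a b}

/-- Minimal cardinality of a finite cover of `X` by sets of `ρ`-diameter `< ε`. -/
noncomputable def covN {M : Type*} (X : Set M) (ρ : M → M → ℝ) (ε : ℝ) : ℕ :=
  sInf {n : ℕ | ∃ U : Fin n → Set M, X ⊆ (⋃ i, U i) ∧ ∀ i, rdiam ρ (U i) < ε}

/-- `dᶠₙ(x,y) = max_{|k| ≤ n} d(fᵏ x, fᵏ y)`. -/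
noncomputable def dFn {M : Type*} [MetricSpace M] (f : Equiv.Perm M) (n : ℕ) (x y : M) : ℝ :=
  sSup {r : ℝ | ∃ k : ℤ, |k| ≤ (n : ℤ) ∧ r = dist ((f ^ k) x) ((f ^ k) y)}

/-- `d⁺ₙ(x,y) = max_{0 ≤ k ≤ n} d(fᵏ x, fᵏ y)`. -/
noncomputable def dPlusn {M : Type*} [MetricSpace M] (f : Equiv.Perm M) (n : ℕ) (x y : M) : ℝ :=
  sSup {r : ℝ | ∃ k : ℕ, k ≤ n ∧ r = dist ((f ^ k) x) ((f ^ k) y)}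

/-- `d⁻ₙ(x,y) = max_{0 ≤ k ≤ n} d(f⁻ᵏ x, f⁻ᵏ y)`. -/
noncomputable def dMinusn {M : Type*} [MetricSpace M] (f : Equiv.Perm M) (n : ℕ) (x y : M) : ℝ :=
  sSup {r : ℝ | ∃ k : ℕ, k ≤ n ∧ r = dist ((f.symm ^ k) x) ((f.symm ^ k) y)}

/-!
Write `D k = d(fᵏ p, fᵏ q)`. While `D ≤ ξ`, self-similarity says `max (D (k+1)) (D (k-1)) = λ D k`.
A strict increase towards the past would propagate geometrically and leave `[0, ξ]`, so if `D ≤ ξ`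
on the whole past then `D` is nondecreasing there and the maximum is always the forward term. On an
unstable set the far past is controlled by hypothesis and the recent past by restricting to a piece
of diameter `< ξ / λᴺ`, hence on such pieces `d⁺ₙ < ξ` is equivalent to `d < ξ / λⁿ`. This gives
`cov_ξ(X, d⁺ₙ) ≤ cov_ξ(X, dᶠₙ) ≤ cov_{ξ/λⁿ}(X, d) ≤ K cov_ξ(X, d⁺ₙ)` with `K` independent of `n`.
-/

section SelfSimilarSeq

/-- The recursion satisfied by the distances `D k = d(fᵏ p, fᵏ q)` along the orbits of two points
when the metric is self-similar for `f`. -/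
structure IsSelfSimilarSeq (D : ℤ → ℝ) (ξ lam : ℝ) : Prop where
  nonneg : ∀ k, 0 ≤ D k
  max_eq : ∀ k, D k ≤ ξ → max (D (k + 1)) (D (k - 1)) = lam * D k

namespace IsSelfSimilarSeq

variable {D : ℤ → ℝ} {ξ lam : ℝ}

lemma comp_neg (hD : IsSelfSimilarSeq D ξ lam) : IsSelfSimilarSeq (fun k => D (-k)) ξ lam where
  nonneg k := hD.nonneg (-k)
  max_eq k hk := by
    rw [← hD.max_eq (-k) hk, max_comm, neg_add', neg_sub', sub_neg_eq_add]

lemma le_pow_mul (hD : IsSelfSimilarSeq D ξ lam) (hlam : 1 ≤ lam) {n : ℕ}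
    (hn : lam ^ n * D 0 ≤ ξ) {k : ℕ} (hk : k ≤ n) : D k ≤ lam ^ k * D 0 := by
  induction k with
  | zero => simp
  | succ k ih =>
    have ih : D k ≤ lam ^ k * D 0 := ih (by omega)
    have hpow : lam ^ k * D 0 ≤ lam ^ n * D 0 :=
      mul_le_mul_of_nonneg_right (pow_le_pow_right₀ hlam (by omega)) (hD.nonneg 0)
    calc D ((k + 1 : ℕ) : ℤ) ≤ max (D (k + 1)) (D (k - 1)) := by push_cast; exact le_max_left _ _
      _ = lam * D k := hD.max_eq k (ih.trans (hpow.trans hn))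
      _ ≤ lam * (lam ^ k * D 0) := by gcongr
      _ = lam ^ (k + 1) * D 0 := by ring

lemma le_pow_mul_of_abs_le (hD : IsSelfSimilarSeq D ξ lam) (hlam : 1 ≤ lam) {n : ℕ}
    (hn : lam ^ n * D 0 ≤ ξ) {k : ℤ} (hk : |k| ≤ n) : D k ≤ lam ^ n * D 0 := by
  have hpow {j : ℕ} (hj : j ≤ n) : lam ^ j * D 0 ≤ lam ^ n * D 0 :=
    mul_le_mul_of_nonneg_right (pow_le_pow_right₀ hlam hj) (hD.nonneg 0)
  obtain ⟨j, rfl | rfl⟩ := Int.eq_nat_or_neg k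
  · have hj : j ≤ n := by simpa using hk
    exact (hD.le_pow_mul hlam hn hj).trans (hpow hj)
  · have hj : j ≤ n := by simpa using hk
    exact (hD.comp_neg.le_pow_mul hlam (by simpa using hn) hj).trans (by simpa using hpow hj)

lemma pred_eq_mul_of_succ_lt (hD : IsSelfSimilarSeq D ξ lam) (hlam : 1 < lam) {k : ℤ}
    (hk : D k ≤ ξ) (hlt : D (k + 1) < D k) : D (k - 1) = lam * D k := by
  have hgrow : D k < lam * D k :=
    lt_mul_of_one_lt_left ((hD.nonneg (k + 1)).trans_lt hlt) hlam
  rw [← hD.max_eq k hk] at hgrow ⊢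
  have hpred : D k < D (k - 1) := (lt_max_iff.1 hgrow).resolve_left hlt.not_gt
  exact (max_eq_right (hlt.trans hpred).le).symm

lemma le_succ_of_forall_le (hD : IsSelfSimilarSeq D ξ lam) (hlam : 1 < lam) {k : ℤ}
    (hk : ∀ j ≤ k, D j ≤ ξ) : D k ≤ D (k + 1) := by
  by_contra! hlt
  have hpos : 0 < D k := (hD.nonneg (k + 1)).trans_lt hlt
  have hpast : ∀ n : ℕ, D (k - n) = lam ^ n * D k ∧ D (k - n + 1) < D (k - n) := by
    intro n
    induction n with
    | zero => simpa using hlt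
    | succ n ih =>
      have hstep : D (k - n - 1) = lam * D (k - n) :=
        hD.pred_eq_mul_of_succ_lt hlam (hk _ (by omega)) ih.2
      have hposn : 0 < D (k - n) := (hD.nonneg _).trans_lt ih.2
      rw [Nat.cast_succ, ← sub_sub, sub_add_cancel, hstep]
      exact ⟨by rw [ih.1]; ring, lt_mul_of_one_lt_left hposn hlam⟩
  obtain ⟨n, hn⟩ := pow_unbounded_of_one_lt (ξ / D k) hlam
  exact ((div_lt_iff₀ hpos).1 hn).not_ge ((hpast n).1 ▸ hk (k - n) (by omega))

lemma succ_eq_mul (hD : IsSelfSimilarSeq D ξ lam) (hlam : 1 < lam) {k : ℤ}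
    (hk : ∀ j ≤ k, D j ≤ ξ) : D (k + 1) = lam * D k := by
  have hpred : D (k - 1) ≤ D k := by
    simpa using hD.le_succ_of_forall_le hlam (k := k - 1) fun j hj => hk j (by omega)
  rw [← hD.max_eq k (hk k le_rfl), max_eq_left (hpred.trans (hD.le_succ_of_forall_le hlam hk))]

lemma eq_pow_mul (hD : IsSelfSimilarSeq D ξ lam) (hlam : 1 < lam) {n : ℕ}
    (hn : ∀ j : ℤ, j < n → D j ≤ ξ) : D n = lam ^ n * D 0 := by
  induction n with
  | zero => simp
  | succ n ih =>
    have hstep : D (n + 1) = lam * D n := hD.succ_eq_mul hlam fun j hj => hn j (by omega)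
    rw [Nat.cast_succ, hstep, ih fun j hj => hn j (by omega)]
    ring

end IsSelfSimilarSeq

end SelfSimilarSeq

section Covers

variable {α : Type*} {ρ ρ' ρ'' : α → α → ℝ} {A X : Set α} {ε ε' ε'' : ℝ}

lemma le_rdiam {B : ℝ} (hB : ∀ a ∈ A, ∀ b ∈ A, ρ a b ≤ B) {a b : α} (ha : a ∈ A) (hb : b ∈ A) :
    ρ a b ≤ rdiam ρ A :=
  le_csSup ⟨B, by rintro _ ⟨a, ha, b, hb, rfl⟩; exact hB a ha b hb⟩ ⟨a, ha, b, hb, rfl⟩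

lemma rdiam_le {C : ℝ} (hC : 0 ≤ C) (h : ∀ a ∈ A, ∀ b ∈ A, ρ a b ≤ C) : rdiam ρ A ≤ C :=
  Real.sSup_le (by rintro _ ⟨a, ha, b, hb, rfl⟩; exact h a ha b hb) hC

lemma rdiam_nonneg (h : ∀ a ∈ A, ∀ b ∈ A, 0 ≤ ρ a b) : 0 ≤ rdiam ρ A :=
  Real.sSup_nonneg (by rintro _ ⟨a, ha, b, hb, rfl⟩; exact h a ha b hb)

lemma rdiam_dist [PseudoMetricSpace α] (hA : Bornology.IsBounded A) :
    rdiam (fun a b => dist a b) A = Metric.diam A :=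
  le_antisymm
    (rdiam_le Metric.diam_nonneg fun _ ha _ hb => Metric.dist_le_diam_of_mem hA ha hb)
    (Metric.diam_le_of_forall_dist_le (rdiam_nonneg fun _ _ _ _ => dist_nonneg) fun _ ha _ hb =>
      le_rdiam (fun _ ha _ hb => Metric.dist_le_diam_of_mem hA ha hb) ha hb)

/-- `X` is covered by `n` sets of `ρ`-diameter less than `ε`; thus `covN X ρ ε` is the least such
`n`, with the junk value `0` if there is none. -/
def HasCover (X : Set α) (ρ : α → α → ℝ) (ε : ℝ) (n : ℕ) : Prop :=
  ∃ U : Fin n → Set α, X ⊆ (⋃ i, U i) ∧ ∀ i, rdiam ρ (U i) < ε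

lemma HasCover.covN_le {n : ℕ} (h : HasCover X ρ ε n) : covN X ρ ε ≤ n :=
  Nat.sInf_le (s := {n | HasCover X ρ ε n}) h

lemma hasCover_covN (h : ∃ n, HasCover X ρ ε n) : HasCover X ρ ε (covN X ρ ε) :=
  Nat.sInf_mem (s := {n | HasCover X ρ ε n}) h

lemma HasCover.mono {n : ℕ} (h : HasCover X ρ ε n)
    (hρ : ∀ A, rdiam ρ A < ε → rdiam ρ' A < ε') : HasCover X ρ' ε' n :=
  let ⟨U, hXU, hU⟩ := h
  ⟨U, hXU, fun i => hρ _ (hU i)⟩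

lemma HasCover.mul {m n : ℕ} (hm : HasCover X ρ ε m) (hn : HasCover X ρ' ε' n)
    (hρ : ∀ A B, rdiam ρ A < ε → rdiam ρ' B < ε' → rdiam ρ'' (A ∩ B ∩ X) < ε'') :
    HasCover X ρ'' ε'' (m * n) := by
  obtain ⟨U, hXU, hU⟩ := hm
  obtain ⟨V, hXV, hV⟩ := hn
  refine ⟨fun k => U (finProdFinEquiv.symm k).1 ∩ V (finProdFinEquiv.symm k).2 ∩ X,
    fun x hx => ?_, fun k => hρ _ _ (hU _) (hV _)⟩
  obtain ⟨i, hi⟩ := Set.mem_iUnion.1 (hXU hx)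
  obtain ⟨j, hj⟩ := Set.mem_iUnion.1 (hXV hx)
  exact Set.mem_iUnion.2 ⟨finProdFinEquiv (i, j), by simpa using ⟨⟨hi, hj⟩, hx⟩⟩

lemma covN_le_covN (h : ∃ n, HasCover X ρ ε n) (hρ : ∀ A, rdiam ρ A < ε → rdiam ρ' A < ε') :
    covN X ρ' ε' ≤ covN X ρ ε :=
  ((hasCover_covN h).mono hρ).covN_le

lemma exists_hasCover_of_totallyBounded [PseudoMetricSpace α] (hX : TotallyBounded X) (hε : 0 < ε) :
    ∃ n, HasCover X (fun a b => dist a b) ε n := by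
  obtain ⟨t, ht, hXt⟩ := Metric.totallyBounded_iff.1 hX (ε / 3) (by positivity)
  obtain ⟨n, c, hc⟩ := ht.fin_embedding
  refine ⟨n, fun i => Metric.ball (c i) (ε / 3), by simpa [← hc] using hXt, fun i => ?_⟩
  rw [rdiam_dist Metric.isBounded_ball]
  linarith [Metric.diam_ball (x := c i) (show 0 ≤ ε / 3 by positivity)]

end Covers

section IterateDistances

variable {M : Type*} [MetricSpace M] {f : Equiv.Perm M} {n : ℕ} {x y : M}

lemma dist_pow_le_dPlusn {k : ℕ} (hk : k ≤ n) : dist ((f ^ k) x) ((f ^ k) y) ≤ dPlusn f n x y :=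
  le_csSup (((Set.finite_Iic n).image fun k => dist ((f ^ k) x) ((f ^ k) y)).bddAbove.mono
    (by rintro _ ⟨k, hk, rfl⟩; exact ⟨k, hk, rfl⟩)) ⟨k, hk, rfl⟩

lemma dist_zpow_le_dFn {k : ℤ} (hk : |k| ≤ n) : dist ((f ^ k) x) ((f ^ k) y) ≤ dFn f n x y :=
  le_csSup (((Set.finite_Icc (-n : ℤ) n).image fun k => dist ((f ^ k) x) ((f ^ k) y)).bddAbove.mono
    (by rintro _ ⟨k, hk, rfl⟩; exact ⟨k, abs_le.1 hk, rfl⟩)) ⟨k, hk, rfl⟩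

lemma dPlusn_le {C : ℝ} (h : ∀ k ≤ n, dist ((f ^ k) x) ((f ^ k) y) ≤ C) : dPlusn f n x y ≤ C :=
  csSup_le ⟨_, 0, n.zero_le, rfl⟩ (by rintro _ ⟨k, hk, rfl⟩; exact h k hk)

lemma dFn_le {C : ℝ} (h : ∀ k : ℤ, |k| ≤ n → dist ((f ^ k) x) ((f ^ k) y) ≤ C) :
    dFn f n x y ≤ C :=
  csSup_le ⟨_, 0, by simp, rfl⟩ (by rintro _ ⟨k, hk, rfl⟩; exact h k hk)

lemma dPlusn_nonneg : 0 ≤ dPlusn f n x y :=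
  dist_nonneg.trans (dist_pow_le_dPlusn n.zero_le)

lemma dPlusn_le_dFn : dPlusn f n x y ≤ dFn f n x y :=
  dPlusn_le fun k hk => by
    simpa using dist_zpow_le_dFn (f := f) (x := x) (y := y) (k := k) (by simpa using hk)

lemma dFn_nonneg : 0 ≤ dFn f n x y :=
  dPlusn_nonneg.trans dPlusn_le_dFn

lemma dFn_le_diam_univ [BoundedSpace M] : dFn f n x y ≤ Metric.diam (Set.univ : Set M) :=
  dFn_le fun _ _ => Metric.dist_le_diam_of_mem (.all _) trivial trivial

lemma rdiam_dPlusn_le [BoundedSpace M] {A : Set M} : rdiam (dPlusn f n) A ≤ rdiam (dFn f n) A :=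
  rdiam_le (rdiam_nonneg fun _ _ _ _ => dFn_nonneg) fun _ ha _ hb =>
    dPlusn_le_dFn.trans (le_rdiam (ρ := dFn f n) (fun _ _ _ _ => dFn_le_diam_univ) ha hb)

lemma dFn_symm (f : Equiv.Perm M) (n : ℕ) : dFn f.symm n = dFn f n := by
  have hle (g : Equiv.Perm M) (x y : M) : dFn g.symm n x y ≤ dFn g n x y :=
    dFn_le fun k hk => by
      rw [← Equiv.Perm.inv_def, inv_zpow']
      exact dist_zpow_le_dFn (by rwa [abs_neg])
  funext x y
  exact le_antisymm (hle f x y) (hle f.symm x y)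

end IterateDistances

section SelfSimilar

variable {M : Type*} [MetricSpace M] {f : Equiv.Perm M} {ξ lam : ℝ} {p q : M} {X : Set M}

/-- The metric is self-similar for `f` with expanding factor `lam` and constant `ξ`. -/
def SelfSimilar (f : Equiv.Perm M) (ξ lam : ℝ) : Prop :=
  ∀ p q : M, dist p q ≤ ξ →
    max (dist (f p) (f q)) (dist (f.symm p) (f.symm q)) = lam * dist p q

/-- `X` is an unstable set of `f`: the diameters of its backward images tend to `0`. The stable
sets of `f` are the unstable sets of `f.symm`. -/
def IsUnstable (f : Equiv.Perm M) (X : Set M) : Prop :=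
  Tendsto (fun n : ℕ => Metric.diam ((fun z => (f.symm ^ n) z) '' X)) atTop (𝓝 0)

lemma IsUnstable.exists_forall_dist_le [BoundedSpace M] (hX : IsUnstable f X) (hξ : 0 < ξ) :
    ∃ N, ∀ k ≥ N, ∀ p ∈ X, ∀ q ∈ X, dist ((f.symm ^ k) p) ((f.symm ^ k) q) ≤ ξ := by
  obtain ⟨N, hN⟩ := eventually_atTop.1 (hX.eventually_le_const hξ)
  exact ⟨N, fun k hk p hp q hq => (Metric.dist_le_diam_of_mem (.all _)
    (Set.mem_image_of_mem _ hp) (Set.mem_image_of_mem _ hq)).trans (hN k hk)⟩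

namespace SelfSimilar

protected lemma symm (hf : SelfSimilar f ξ lam) : SelfSimilar f.symm ξ lam :=
  fun p q h => (max_comm _ _).trans (hf p q h)

lemma isSelfSimilarSeq (hf : SelfSimilar f ξ lam) (p q : M) :
    IsSelfSimilarSeq (fun k : ℤ => dist ((f ^ k) p) ((f ^ k) q)) ξ lam where
  nonneg _ := dist_nonneg
  max_eq k hk := by
    rw [add_comm k 1, zpow_one_add, sub_eq_neg_add, zpow_add, zpow_neg_one]
    exact hf _ _ hk

lemma dFn_le_pow_mul_dist (hf : SelfSimilar f ξ lam) (hlam : 1 ≤ lam) {n : ℕ}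
    (hpq : lam ^ n * dist p q ≤ ξ) : dFn f n p q ≤ lam ^ n * dist p q :=
  dFn_le fun _ hk => (hf.isSelfSimilarSeq p q).le_pow_mul_of_abs_le hlam hpq hk

lemma pow_mul_dist_le_dPlusn (hf : SelfSimilar f ξ lam) (hlam : 1 < lam) {n : ℕ}
    (hpast : ∀ k : ℕ, dist ((f.symm ^ k) p) ((f.symm ^ k) q) ≤ ξ) (hn : dPlusn f n p q ≤ ξ) :
    lam ^ n * dist p q ≤ dPlusn f n p q := by
  have hle : ∀ j : ℤ, j < n → dist ((f ^ j) p) ((f ^ j) q) ≤ ξ := by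
    intro j hj
    obtain ⟨k, rfl | rfl⟩ := Int.eq_nat_or_neg j
    · exact (dist_pow_le_dPlusn (by omega)).trans hn
    · rw [← inv_zpow']
      exact hpast k
  exact ((hf.isSelfSimilarSeq p q).eq_pow_mul hlam hle).ge.trans (dist_pow_le_dPlusn le_rfl)

lemma dist_symm_pow_le (hf : SelfSimilar f ξ lam) (hlam : 1 ≤ lam) {N : ℕ}
    (hN : ∀ k ≥ N, dist ((f.symm ^ k) p) ((f.symm ^ k) q) ≤ ξ) (hpq : lam ^ N * dist p q ≤ ξ)
    (k : ℕ) : dist ((f.symm ^ k) p) ((f.symm ^ k) q) ≤ ξ := by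
  rcases le_total N k with hk | hk
  · exact hN k hk
  · exact (dist_pow_le_dPlusn hk).trans <| dPlusn_le_dFn.trans <|
      (hf.symm.dFn_le_pow_mul_dist hlam hpq).trans hpq

variable [BoundedSpace M]

lemma rdiam_dFn_lt (hf : SelfSimilar f ξ lam) (hlam : 1 ≤ lam) {n : ℕ} {A : Set M}
    (hA : rdiam (fun a b => dist a b) A < ξ / lam ^ n) : rdiam (dFn f n) A < ξ := by
  rw [rdiam_dist (.all A), lt_div_iff₀' (by positivity)] at hA
  refine (rdiam_le (mul_nonneg (by positivity) Metric.diam_nonneg) fun a ha b hb => ?_).trans_lt hA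
  have hab : lam ^ n * dist a b ≤ lam ^ n * Metric.diam A := by
    gcongr
    exact Metric.dist_le_diam_of_mem (.all A) ha hb
  exact (hf.dFn_le_pow_mul_dist hlam (hab.trans hA.le)).trans hab

lemma covN_dFn_le_covN_dist (hf : SelfSimilar f ξ lam) (hξ : 0 < ξ) (hlam : 1 ≤ lam)
    (hX : TotallyBounded X) (n : ℕ) :
    covN X (dFn f n) ξ ≤ covN X (fun a b => dist a b) (ξ / lam ^ n) :=
  covN_le_covN (exists_hasCover_of_totallyBounded hX (by positivity)) fun _ => hf.rdiam_dFn_lt hlam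

lemma covN_dPlusn_le_covN_dFn (hf : SelfSimilar f ξ lam) (hξ : 0 < ξ) (hlam : 1 ≤ lam)
    (hX : TotallyBounded X) (n : ℕ) : covN X (dPlusn f n) ξ ≤ covN X (dFn f n) ξ := by
  obtain ⟨m, hm⟩ := exists_hasCover_of_totallyBounded hX (ε := ξ / lam ^ n) (by positivity)
  exact covN_le_covN ⟨m, hm.mono fun _ => hf.rdiam_dFn_lt hlam⟩ fun _ => rdiam_dPlusn_le.trans_lt

lemma rdiam_dist_inter_lt (hf : SelfSimilar f ξ lam) (hlam : 1 < lam) {N n : ℕ}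
    (hN : ∀ k ≥ N, ∀ p ∈ X, ∀ q ∈ X, dist ((f.symm ^ k) p) ((f.symm ^ k) q) ≤ ξ) {A B : Set M}
    (hA : rdiam (fun a b => dist a b) A < ξ / lam ^ N) (hB : rdiam (dPlusn f n) B < ξ) :
    rdiam (fun a b => dist a b) (A ∩ B ∩ X) < ξ / lam ^ n := by
  rw [rdiam_dist (.all A), lt_div_iff₀' (by positivity)] at hA
  have hB0 : 0 ≤ rdiam (dPlusn f n) B := rdiam_nonneg fun _ _ _ _ => dPlusn_nonneg
  have hle : rdiam (fun a b => dist a b) (A ∩ B ∩ X) ≤ rdiam (dPlusn f n) B / lam ^ n := by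
    refine rdiam_le (by positivity) ?_
    rintro p ⟨⟨hpA, hpB⟩, hpX⟩ q ⟨⟨hqA, hqB⟩, hqX⟩
    have hpq : lam ^ N * dist p q ≤ ξ :=
      (mul_le_mul_of_nonneg_left (Metric.dist_le_diam_of_mem (.all A) hpA hqA)
        (by positivity)).trans hA.le
    have hd : dPlusn f n p q ≤ rdiam (dPlusn f n) B :=
      le_rdiam (ρ := dPlusn f n) (fun _ _ _ _ => dPlusn_le_dFn.trans dFn_le_diam_univ) hpB hqB
    have hpast := hf.dist_symm_pow_le hlam.le (fun k hk => hN k hk p hpX q hqX) hpq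
    rw [le_div_iff₀' (by positivity)]
    exact (hf.pow_mul_dist_le_dPlusn hlam hpast (hd.trans hB.le)).trans hd
  exact hle.trans_lt (by gcongr)

lemma exists_covN_dist_le_mul_covN_dPlusn (hf : SelfSimilar f ξ lam) (hξ : 0 < ξ)
    (hlam : 1 < lam) (hX : TotallyBounded X) (hXu : IsUnstable f X) :
    ∃ K, ∀ n, covN X (fun a b => dist a b) (ξ / lam ^ n) ≤ K * covN X (dPlusn f n) ξ := by
  obtain ⟨N, hN⟩ := hXu.exists_forall_dist_le hξ
  have hcover (n : ℕ) : ∃ m, HasCover X (fun a b => dist a b) (ξ / lam ^ n) m :=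
    exists_hasCover_of_totallyBounded hX (by positivity)
  refine ⟨covN X (fun a b => dist a b) (ξ / lam ^ N), fun n => ?_⟩
  have hplus : HasCover X (dPlusn f n) ξ (covN X (dPlusn f n) ξ) := by
    obtain ⟨m, hm⟩ := hcover n
    exact hasCover_covN ⟨m, hm.mono fun _ h => rdiam_dPlusn_le.trans_lt (hf.rdiam_dFn_lt hlam.le h)⟩
  exact ((hasCover_covN (hcover N)).mul hplus fun _ _ => hf.rdiam_dist_inter_lt hlam hN).covN_le

end SelfSimilar

end SelfSimilar

section Growth

/-- The natural numbers `a n` grow exponentially at rate `h`. For `a n = cov_ξ(X, dᶠₙ)` (resp.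
`d⁺ₙ`, `d⁻ₙ`) this says that `ent(X)` (resp. `ent⁺(X)`, `ent⁻(X)`) exists and equals `h`. -/
def HasGrowthRate (a : ℕ → ℕ) (h : ℝ) : Prop :=
  Tendsto (fun n : ℕ => Real.log (a n : ℝ) / (n : ℝ)) atTop (𝓝 h)

/-- The upper capacity of `X` exists as a limit and equals `c`. -/
def HasUpperCapacity {α : Type*} [PseudoMetricSpace α] (X : Set α) (c : ℝ) : Prop :=
  Tendsto (fun ε : ℝ => Real.log ((covN X (fun a b => dist a b) ε : ℕ) : ℝ) / (- Real.log ε))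
    (𝓝[>] (0 : ℝ)) (𝓝 c)

lemma monotone_log_natCast : Monotone fun n : ℕ => Real.log (n : ℝ) := by
  intro a b hab
  rcases a.eq_zero_or_pos with rfl | ha
  · simpa using Real.log_natCast_nonneg b
  · exact Real.log_le_log (by positivity) (by exact_mod_cast hab)

lemma log_natCast_mul_le (a b : ℕ) :
    Real.log ((a * b : ℕ) : ℝ) ≤ Real.log (a : ℝ) + Real.log (b : ℝ) := by
  rcases a.eq_zero_or_pos with rfl | ha
  · simpa using Real.log_natCast_nonneg b
  rcases b.eq_zero_or_pos with rfl | hb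
  · simpa using Real.log_natCast_nonneg a
  · rw [Nat.cast_mul, Real.log_mul (by positivity) (by positivity)]

lemma HasGrowthRate.of_le_of_le_mul {a b : ℕ → ℕ} {h : ℝ} {K : ℕ} (ha : HasGrowthRate a h)
    (hab : ∀ n, a n ≤ b n) (hba : ∀ n, b n ≤ K * a n) : HasGrowthRate b h := by
  have hupper : Tendsto (fun n : ℕ => (Real.log (K : ℝ) + Real.log (a n : ℝ)) / (n : ℝ))
      atTop (𝓝 h) := by
    simpa only [add_div, zero_add] using
      (tendsto_const_div_atTop_nhds_zero_nat (Real.log (K : ℝ))).add ha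
  refine tendsto_of_tendsto_of_tendsto_of_le_of_le ha hupper (fun n => ?_) fun n => ?_
  · exact div_le_div_of_nonneg_right (monotone_log_natCast (hab n)) n.cast_nonneg
  · exact div_le_div_of_nonneg_right
      ((monotone_log_natCast (hba n)).trans (log_natCast_mul_le K (a n))) n.cast_nonneg

lemma tendsto_div_atTop_of_monotone {u : ℝ → ℝ} {h : ℝ} (hu : Monotone u)
    (hlim : Tendsto (fun n : ℕ => u n / n) atTop (𝓝 h)) :
    Tendsto (fun x => u x / x) atTop (𝓝 h) := by
  have hfloor : Tendsto (fun x : ℝ => u ⌊x⌋₊ / ⌊x⌋₊ * (⌊x⌋₊ / x)) atTop (𝓝 h) := by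
    simpa using (hlim.comp tendsto_nat_floor_atTop).mul tendsto_nat_floor_div_atTop
  have hceil : Tendsto (fun x : ℝ => u ⌈x⌉₊ / ⌈x⌉₊ * (⌈x⌉₊ / x)) atTop (𝓝 h) := by
    simpa using (hlim.comp tendsto_nat_ceil_atTop).mul tendsto_nat_ceil_div_atTop
  refine tendsto_of_tendsto_of_tendsto_of_le_of_le' hfloor hceil ?_ ?_ <;>
    filter_upwards [eventually_ge_atTop 1] with x hx
  · have hpos : (⌊x⌋₊ : ℝ) ≠ 0 := by exact_mod_cast (Nat.floor_pos.2 hx).ne'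
    rw [div_mul_div_cancel₀ hpos]
    gcongr
    exact hu (Nat.floor_le (by positivity))
  · have hpos : (⌈x⌉₊ : ℝ) ≠ 0 := by exact_mod_cast (Nat.ceil_pos.2 (by positivity)).ne'
    rw [div_mul_div_cancel₀ hpos]
    gcongr
    exact hu (Nat.le_ceil x)

lemma tendsto_logb_const_div_nhdsGT_zero {ξ lam : ℝ} (hξ : 0 < ξ) (hlam : 1 < lam) :
    Tendsto (fun ε => Real.logb lam (ξ / ε)) (𝓝[>] 0) atTop :=
  (Real.tendsto_logb_atTop hlam).comp (tendsto_inv_nhdsGT_zero.const_mul_atTop hξ)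

lemma tendsto_logb_const_div_div_neg_log {ξ lam : ℝ} (hξ : ξ ≠ 0) :
    Tendsto (fun ε => Real.logb lam (ξ / ε) / (-Real.log ε)) (𝓝[>] 0) (𝓝 (Real.log lam)⁻¹) := by
  have hlim : Tendsto (fun ε => (Real.log ξ / (-Real.log ε) + 1) * (Real.log lam)⁻¹)
      (𝓝[>] 0) (𝓝 (Real.log lam)⁻¹) := by
    simpa using (((tendsto_neg_atBot_atTop.comp Real.tendsto_log_nhdsGT_zero).const_div_atTop
      (Real.log ξ)).add_const 1).mul_const (Real.log lam)⁻¹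
  refine hlim.congr' ?_
  filter_upwards [Ioo_mem_nhdsGT zero_lt_one] with ε hε
  have hlog : Real.log ε ≠ 0 := (Real.log_neg hε.1 hε.2).ne
  rw [Real.logb, Real.log_div hξ hε.1.ne']
  field_simp
  ring

lemma tendsto_div_neg_log_of_antitoneOn {L : ℝ → ℝ} {ξ lam h : ℝ} (hξ : 0 < ξ) (hlam : 1 < lam)
    (hL : AntitoneOn L (Set.Ioi 0))
    (hlim : Tendsto (fun n : ℕ => L (ξ / lam ^ n) / n) atTop (𝓝 h)) :
    Tendsto (fun ε => L ε / (-Real.log ε)) (𝓝[>] 0) (𝓝 (h / Real.log lam)) := by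
  have hmono : Monotone fun x : ℝ => L (ξ / lam ^ x) := fun x y hxy =>
    hL (Set.mem_Ioi.2 (by positivity)) (Set.mem_Ioi.2 (by positivity))
      (by gcongr; exact hlam.le)
  have hcont := tendsto_div_atTop_of_monotone hmono (by simpa using hlim)
  have hprod := (hcont.comp (tendsto_logb_const_div_nhdsGT_zero hξ hlam)).mul
    (tendsto_logb_const_div_div_neg_log (lam := lam) hξ.ne')
  refine (div_eq_mul_inv h (Real.log lam) ▸ hprod).congr' ?_
  filter_upwards [self_mem_nhdsWithin,
    (tendsto_logb_const_div_nhdsGT_zero hξ hlam).eventually_ne_atTop 0] with ε hε hne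
  have hsample : ξ / lam ^ Real.logb lam (ξ / ε) = ε := by
    rw [Real.rpow_logb (by positivity) hlam.ne' (div_pos hξ hε), div_div_cancel₀ hξ.ne']
  simp only [Function.comp_apply, hsample]
  exact div_mul_div_cancel₀ hne

lemma HasGrowthRate.hasUpperCapacity {α : Type*} [PseudoMetricSpace α] {X : Set α}
    {ξ lam h : ℝ} (hX : TotallyBounded X) (hξ : 0 < ξ) (hlam : 1 < lam)
    (hrate : HasGrowthRate (fun n => covN X (fun a b => dist a b) (ξ / lam ^ n)) h) :
    HasUpperCapacity X (h / Real.log lam) := by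
  refine tendsto_div_neg_log_of_antitoneOn hξ hlam (fun ε hε δ _ hεδ => ?_) hrate
  exact monotone_log_natCast <| covN_le_covN (exists_hasCover_of_totallyBounded hX hε)
    fun _ hA => hA.trans_le hεδ

end Growth

section Main

variable {M : Type*} [MetricSpace M] [BoundedSpace M] {f : Equiv.Perm M} {ξ lam : ℝ}

theorem IsUnstable.hasUpperCapacity_and_hasGrowthRate_dFn {X : Set M} (hX : IsUnstable f X)
    (hXtb : TotallyBounded X) (hf : SelfSimilar f ξ lam) (hξ : 0 < ξ) (hlam : 1 < lam) {h : ℝ}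
    (hplus : HasGrowthRate (fun n => covN X (dPlusn f n) ξ) h) :
    HasUpperCapacity X (h / Real.log lam) ∧ HasGrowthRate (fun n => covN X (dFn f n) ξ) h := by
  obtain ⟨K, hK⟩ := hf.exists_covN_dist_le_mul_covN_dPlusn hξ hlam hXtb hX
  have hplus_le := hf.covN_dPlusn_le_covN_dFn hξ hlam.le hXtb
  have hle_dist := hf.covN_dFn_le_covN_dist hξ hlam.le hXtb
  have hdist := hplus.of_le_of_le_mul (fun n => (hplus_le n).trans (hle_dist n)) hK
  exact ⟨hdist.hasUpperCapacity hXtb hξ hlam,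
    hplus.of_le_of_le_mul hplus_le fun n => (hle_dist n).trans (hK n)⟩

theorem stmt_13_general (hf : SelfSimilar f ξ lam) (hξ : 0 < ξ) (hlam : 1 < lam)
    {X Y : Set M} (hXtb : TotallyBounded X) (hX : IsUnstable f X)
    (hYtb : TotallyBounded Y) (hY : IsUnstable f.symm Y) {EpX EmY : ℝ}
    (hEpX : HasGrowthRate (fun n => covN X (dPlusn f n) ξ) EpX)
    (hEmY : HasGrowthRate (fun n => covN Y (dMinusn f n) ξ) EmY) :
    (HasUpperCapacity X (EpX / Real.log lam) ∧
      HasGrowthRate (fun n => covN X (dFn f n) ξ) EpX) ∧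
    (HasUpperCapacity Y (EmY / Real.log lam) ∧
      HasGrowthRate (fun n => covN Y (dFn f n) ξ) EmY) := by
  have hstable := hY.hasUpperCapacity_and_hasGrowthRate_dFn hYtb hf.symm hξ hlam hEmY
  simp only [dFn_symm] at hstable
  exact ⟨hX.hasUpperCapacity_and_hasGrowthRate_dFn hXtb hf hξ hlam hEpX, hstable⟩

end Main

theorem stmt_13 {M : Type*} [MetricSpace M] [CompactSpace M]
    (f : Equiv.Perm M) (hf : Continuous f) (hf' : Continuous f.symm)
    (ξ lam : ℝ) (hξ : 0 < ξ) (hlam : 1 < lam)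
    (hexp : ∀ x y : M, x ≠ y → ∃ n : ℤ, ξ < dist ((f ^ n) x) ((f ^ n) y))
    (hss : ∀ p q : M, dist p q ≤ ξ →
      max (dist (f p) (f q)) (dist (f.symm p) (f.symm q)) = lam * dist p q)
    (X : Set M)
    (hX : Tendsto (fun n : ℕ => Metric.diam ((fun z => (f.symm ^ n) z) '' X)) atTop (𝓝 0))
    (EpX EX : ℝ)
    (hEpX : Tendsto (fun n : ℕ =>
        Real.log ((covN X (dPlusn f n) ξ : ℕ) : ℝ) / (n : ℝ)) atTop (𝓝 EpX))
    (hEX : Tendsto (fun n : ℕ =>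
        Real.log ((covN X (dFn f n) ξ : ℕ) : ℝ) / (n : ℝ)) atTop (𝓝 EX))
    (Y : Set M)
    (hY : Tendsto (fun n : ℕ => Metric.diam ((fun z => (f ^ n) z) '' Y)) atTop (𝓝 0))
    (EmY EY : ℝ)
    (hEmY : Tendsto (fun n : ℕ =>
        Real.log ((covN Y (dMinusn f n) ξ : ℕ) : ℝ) / (n : ℝ)) atTop (𝓝 EmY))
    (hEY : Tendsto (fun n : ℕ =>
        Real.log ((covN Y (dFn f n) ξ : ℕ) : ℝ) / (n : ℝ)) atTop (𝓝 EY)) :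
    (Tendsto (fun ε : ℝ =>
        Real.log ((covN X (fun a b => dist a b) ε : ℕ) : ℝ) / (- Real.log ε))
      (𝓝[>] (0 : ℝ)) (𝓝 (EpX / Real.log lam)) ∧
      EpX / Real.log lam = EX / Real.log lam) ∧
    (Tendsto (fun ε : ℝ =>
        Real.log ((covN Y (fun a b => dist a b) ε : ℕ) : ℝ) / (- Real.log ε))
      (𝓝[>] (0 : ℝ)) (𝓝 (EmY / Real.log lam)) ∧
      EmY / Real.log lam = EY / Real.log lam) := by
  obtain ⟨⟨hcapX, hrateX⟩, hcapY, hrateY⟩ := stmt_13_general hss hξ hlam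
    (isCompact_univ.totallyBounded.subset X.subset_univ) hX
    (isCompact_univ.totallyBounded.subset Y.subset_univ) hY hEpX hEmY
  exact ⟨⟨hcapX, by rw [tendsto_nhds_unique hrateX hEX]⟩,
    hcapY, by rw [tendsto_nhds_unique hrateY hEY]⟩
end

section
/- Let f be an expansive homeomorphism with canonical coordinates of a compact metric space (M,d), where 3ξ is an expansivity constant and d is self-similar for f with expanding factor λ > 1 and constant ξ. If r < ξ and C = C_r(p) is a product box, then ent⁺(C) = ent⁺(P^u) for every unstable plaque P^u of C and ent⁻(C) = ent⁻(P^s) for every stable plaque P^s of C. -/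
open Filter Topology

def Ws {M : Type*} [MetricSpace M] (f : Equiv.Perm M) (eps : ℝ) (x : M) : Set M :=
  {y | ∀ n : ℕ, dist ((f ^ n) x) ((f ^ n) y) ≤ eps}

def Wu {M : Type*} [MetricSpace M] (f : Equiv.Perm M) (eps : ℝ) (x : M) : Set M :=
  {y | ∀ n : ℕ, dist ((f.symm ^ n) x) ((f.symm ^ n) y) ≤ eps}

/-!
Two points in the same stable set approach each other like `λ⁻ᵏ`: if two orbit segments of length
`2m` stay `ξ`-close, expansion forces their distance at the midpoint to be at most `ξ λ⁻ᵐ`. Hence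
every point `[x, y]` of a product box is forward asymptotic, at a uniform exponential rate, to the
point `[x₀, y]` of a given unstable plaque. Take a set of `d⁺ₙ`-diameter `< ξ` in the plaque and
two points of the box shadowed by it. At times in `[m, n - m]` the shadows are `ξ λ⁻ᵐ`-close and
the points are `O(λ⁻ᵐ)`-close to their shadows, so only the first and last `m` times can separate
them, and a number of sets independent of `n` controls these. So the covering numbers of box and
plaque differ by a bounded factor, which is invisible in the exponential growth rate. The stable
case is the unstable one for `f⁻¹`.
-/

theorem pow_mul_le_of_mul_le_max {a : ℕ → ℝ} {lam c : ℝ} {n : ℕ} (hlam : 0 ≤ lam)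
    (ha : ∀ k ≤ n, a k ≤ c) (h : ∀ k, k + 2 ≤ n → lam * a (k + 1) ≤ max (a (k + 2)) (a k))
    {m k : ℕ} (hmk : m ≤ k) (hkn : k + m ≤ n) : lam ^ m * a k ≤ c := by
  induction m generalizing k with
  | zero => simpa using ha k hkn
  | succ m ih =>
    obtain ⟨k, rfl⟩ := Nat.exists_eq_add_of_le' (Nat.one_le_of_lt hmk)
    calc
      lam ^ (m + 1) * a (k + 1) = lam ^ m * (lam * a (k + 1)) := by ring
      _ ≤ lam ^ m * max (a (k + 2)) (a k) := by
        gcongr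
        exact h k (by lia)
      _ = max (lam ^ m * a (k + 2)) (lam ^ m * a k) := mul_max_of_nonneg _ _ (by positivity)
      _ ≤ c := max_le (ih (by lia) (by lia)) (ih (by lia) (by lia))

theorem symm_pow_sub_apply_pow {α : Type*} (f : Equiv.Perm α) {k n : ℕ} (hkn : k ≤ n) (x : α) :
    (f.symm ^ (n - k)) ((f ^ n) x) = (f ^ k) x := by
  obtain ⟨j, rfl⟩ := Nat.exists_eq_add_of_le' hkn
  rw [Nat.add_sub_cancel, pow_add, Equiv.Perm.mul_apply, ← Equiv.Perm.inv_def, inv_pow]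
  exact Equiv.symm_apply_apply _ _

section Cover

variable {M : Type*} {X Y : Set M} {ρ : M → M → ℝ} {ε : ℝ} {n : ℕ}

/-- `X` is covered by `n` sets of `ρ`-diameter `< ε`. The least such `n` is `covN X ρ ε`, but that
number is also `0` when there is no such `n`. -/
def CoverableBy (X : Set M) (ρ : M → M → ℝ) (ε : ℝ) (n : ℕ) : Prop :=
  ∃ U : Fin n → Set M, X ⊆ ⋃ i, U i ∧ ∀ i, rdiam ρ (U i) < ε

theorem coverableBy_card {ι : Type*} [Fintype ι] (U : ι → Set M) (hX : X ⊆ ⋃ i, U i)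
    (hU : ∀ i, rdiam ρ (U i) < ε) : CoverableBy X ρ ε (Fintype.card ι) :=
  ⟨U ∘ (Fintype.equivFin ι).symm, by
    simpa only [Function.comp_apply, (Fintype.equivFin ι).symm.surjective.iUnion_comp U] using hX,
    fun _ => hU _⟩

namespace CoverableBy

theorem covN_le (h : CoverableBy X ρ ε n) : covN X ρ ε ≤ n :=
  Nat.sInf_le h

theorem coverableBy_covN (h : CoverableBy X ρ ε n) : CoverableBy X ρ ε (covN X ρ ε) :=
  Nat.sInf_mem (s := {n | CoverableBy X ρ ε n}) ⟨n, h⟩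

theorem mono (hXY : X ⊆ Y) (h : CoverableBy Y ρ ε n) : CoverableBy X ρ ε n :=
  let ⟨U, hY, hU⟩ := h
  ⟨U, hXY.trans hY, hU⟩

theorem pos (h : CoverableBy X ρ ε n) (hX : X.Nonempty) : 0 < n := by
  obtain ⟨U, hXU, -⟩ := h
  obtain ⟨x, hx⟩ := hX
  obtain ⟨i, -⟩ := Set.mem_iUnion.1 (hXU hx)
  exact i.pos

theorem mul_of_shadow {P : Set M} {ι : Type*} [Fintype ι] (hP : CoverableBy P ρ ε n)
    (V : ι → Set M) (hXV : X ⊆ ⋃ i, V i) (R : M → M → Prop) (hR : ∀ x ∈ X, ∃ y ∈ P, R x y)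
    (hV : ∀ i U, rdiam ρ U < ε → rdiam ρ {x | x ∈ V i ∧ ∃ y ∈ U, R x y} < ε) :
    CoverableBy X ρ ε (Fintype.card ι * n) := by
  obtain ⟨U, hPU, hU⟩ := hP
  have hcover : X ⊆ ⋃ ij : ι × Fin n, {x | x ∈ V ij.1 ∧ ∃ y ∈ U ij.2, R x y} := by
    intro x hx
    obtain ⟨y, hy, hxy⟩ := hR x hx
    obtain ⟨i, hi⟩ := Set.mem_iUnion.1 (hXV hx)
    obtain ⟨j, hj⟩ := Set.mem_iUnion.1 (hPU hy)
    exact Set.mem_iUnion.2 ⟨(i, j), hi, y, hj, hxy⟩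
  simpa only [Fintype.card_prod, Fintype.card_fin] using
    coverableBy_card _ hcover fun ij => hV ij.1 (U ij.2) (hU ij.2)

end CoverableBy

end Cover

section DynamicalMetric

variable {M : Type*} [MetricSpace M] {f : Equiv.Perm M} {n : ℕ} {c ε : ℝ}

theorem dPlusn_le_iff {x y : M} :
    dPlusn f n x y ≤ c ↔ ∀ k ≤ n, dist ((f ^ k) x) ((f ^ k) y) ≤ c := by
  have himage : {r : ℝ | ∃ k : ℕ, k ≤ n ∧ r = dist ((f ^ k) x) ((f ^ k) y)} =
      (fun k : ℕ => dist ((f ^ k) x) ((f ^ k) y)) '' Set.Iic n := by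
    ext r
    simp only [Set.mem_ofPred_eq, Set.mem_image, Set.mem_Iic, eq_comm]
  rw [dPlusn, himage, csSup_le_iff ((Set.finite_Iic n).image _).bddAbove
    ((Set.nonempty_Iic).image _), Set.forall_mem_image]
  rfl

theorem rdiam_dPlusn_le_s14 {A : Set M} (hc : 0 ≤ c)
    (h : ∀ a ∈ A, ∀ b ∈ A, ∀ k ≤ n, dist ((f ^ k) a) ((f ^ k) b) ≤ c) :
    rdiam (dPlusn f n) A ≤ c := by
  refine Real.sSup_le ?_ hc
  rintro _ ⟨a, ha, b, hb, rfl⟩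
  exact dPlusn_le_iff.2 (h a ha b hb)

theorem dist_pow_le_rdiam_dPlusn [BoundedSpace M] {A : Set M} {a b : M} (ha : a ∈ A) (hb : b ∈ A)
    {k : ℕ} (hk : k ≤ n) : dist ((f ^ k) a) ((f ^ k) b) ≤ rdiam (dPlusn f n) A := by
  have hbdd : BddAbove {r : ℝ | ∃ a ∈ A, ∃ b ∈ A, r = dPlusn f n a b} := by
    refine ⟨Metric.diam (Set.univ : Set M), ?_⟩
    rintro _ ⟨x, -, y, -, rfl⟩
    exact dPlusn_le_iff.2 fun k _ =>
      Metric.dist_le_diam_of_mem (Bornology.IsBounded.all _) trivial trivial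
  exact (dPlusn_le_iff.1 le_rfl k hk).trans (le_csSup hbdd ⟨a, ha, b, hb, rfl⟩)

theorem exists_coverableBy_dPlusn [CompactSpace M] (hf : Continuous f) (hε : 0 < ε) (n : ℕ)
    (X : Set M) : ∃ N, CoverableBy X (dPlusn f n) ε N := by
  let V (x : M) : Set M := {y | ∀ k ∈ Set.Iic n, dist ((f ^ k) y) ((f ^ k) x) < ε / 4}
  have hV (x : M) : V x ∈ 𝓝 x := by
    refine (Filter.eventually_all_finite (Set.finite_Iic n)).2 fun k _ => ?_
    have hcont : Continuous (f ^ k) := by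
      simpa only [Equiv.Perm.coe_pow] using hf.iterate k
    exact Metric.tendsto_nhds.1 hcont.continuousAt _ (by positivity)
  obtain ⟨t, ht⟩ := finite_cover_nhds hV
  refine ⟨Fintype.card t, coverableBy_card (fun c : t => V c) ?_ fun c => ?_⟩
  · rw [Set.iUnion_subtype (· ∈ t) fun c => V c, ht]
    exact Set.subset_univ X
  · refine (rdiam_dPlusn_le_s14 (c := ε / 2) (by positivity) fun a ha b hb k hk => ?_).trans_lt
      (half_lt_self hε)
    linarith [ha k hk, hb k hk, dist_triangle_right ((f ^ k) a) ((f ^ k) b) ((f ^ k) c)]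

end DynamicalMetric

section ExpAsymptotic

variable {M : Type*} [MetricSpace M] {f : Equiv.Perm M} {lam c c' : ℝ} {x y z : M}

/-- The forward orbits of `x` and `y` approach each other exponentially:
`d(fᵏ x, fᵏ y) ≤ c λ⁻ᵏ` for all `k ≥ 0`. -/
def ExpAsymptotic (f : Equiv.Perm M) (lam c : ℝ) (x y : M) : Prop :=
  ∀ k : ℕ, lam ^ k * dist ((f ^ k) x) ((f ^ k) y) ≤ c

namespace ExpAsymptotic

theorem symm (h : ExpAsymptotic f lam c x y) : ExpAsymptotic f lam c y x := fun k => by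
  simpa only [dist_comm] using h k

theorem trans (hlam : 0 ≤ lam) (hxy : ExpAsymptotic f lam c x y)
    (hyz : ExpAsymptotic f lam c' y z) : ExpAsymptotic f lam (c + c') x z := fun k =>
  calc
    lam ^ k * dist ((f ^ k) x) ((f ^ k) z)
      ≤ lam ^ k * (dist ((f ^ k) x) ((f ^ k) y) + dist ((f ^ k) y) ((f ^ k) z)) := by
        gcongr
        exact dist_triangle _ _ _
    _ ≤ c + c' := by
        rw [mul_add]
        exact add_le_add (hxy k) (hyz k)

theorem pow_mul_dist_le (h : ExpAsymptotic f lam c x y) (hlam : 1 ≤ lam) {m k : ℕ} (hmk : m ≤ k) :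
    lam ^ m * dist ((f ^ k) x) ((f ^ k) y) ≤ c :=
  (mul_le_mul_of_nonneg_right (pow_le_pow_right₀ hlam hmk) dist_nonneg).trans (h k)

end ExpAsymptotic

end ExpAsymptotic

section Hyperbolic

variable {M : Type*} [MetricSpace M] {f : Equiv.Perm M} {ξ lam c : ℝ}

/-- The metric of `M` is hyperbolic for `f` at scale `ξ`, with expanding factor `lam`: points at
distance at most `ξ` are moved apart by a factor `lam` by `f` or by `f⁻¹`. A self-similar metric is
one for which equality holds. -/
def IsHyperbolic (f : Equiv.Perm M) (ξ lam : ℝ) : Prop :=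
  ∀ x y : M, dist x y ≤ ξ → lam * dist x y ≤ max (dist (f x) (f y)) (dist (f.symm x) (f.symm y))

namespace IsHyperbolic

theorem symm (h : IsHyperbolic f ξ lam) : IsHyperbolic f.symm ξ lam := fun x y hxy => by
  simpa only [Equiv.symm_symm, max_comm] using h x y hxy

theorem pow_mul_dist_le (h : IsHyperbolic f ξ lam) (hlam : 0 ≤ lam) {x y : M} {n : ℕ}
    (hxy : ∀ k ≤ n, dist ((f ^ k) x) ((f ^ k) y) ≤ ξ) {m k : ℕ} (hmk : m ≤ k) (hkn : k + m ≤ n) :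
    lam ^ m * dist ((f ^ k) x) ((f ^ k) y) ≤ ξ := by
  refine pow_mul_le_of_mul_le_max (a := fun k => dist ((f ^ k) x) ((f ^ k) y)) hlam hxy
    (fun j hj => ?_) hmk hkn
  have hfwd (z : M) : f ((f ^ (j + 1)) z) = (f ^ (j + 2)) z := by
    rw [pow_succ' f (j + 1), Equiv.Perm.mul_apply]
  have hbwd (z : M) : f.symm ((f ^ (j + 1)) z) = (f ^ j) z := by
    rw [pow_succ', Equiv.Perm.mul_apply, Equiv.symm_apply_apply]
  simpa only [hfwd, hbwd] using h _ _ (hxy (j + 1) (by lia))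

theorem expAsymptotic_of_mem_Ws (h : IsHyperbolic f ξ lam) (hlam : 0 ≤ lam) {x y : M}
    (hy : y ∈ Ws f ξ x) : ExpAsymptotic f lam ξ x y := fun k =>
  h.pow_mul_dist_le hlam (n := k + k) (fun j _ => hy j) le_rfl le_rfl

theorem pow_mul_dist_le_of_expAsymptotic (h : IsHyperbolic f ξ lam) (hlam : 1 ≤ lam)
    {a a₀ b b₀ : M} {n : ℕ} (ha : ExpAsymptotic f lam c a a₀) (hb : ExpAsymptotic f lam c b b₀)
    (h₀ : ∀ k ≤ n, dist ((f ^ k) a₀) ((f ^ k) b₀) ≤ ξ) {m k : ℕ} (hmk : m ≤ k)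
    (hkn : k + m ≤ n) : lam ^ m * dist ((f ^ k) a) ((f ^ k) b) ≤ c + ξ + c :=
  calc
    lam ^ m * dist ((f ^ k) a) ((f ^ k) b)
      ≤ lam ^ m * (dist ((f ^ k) a) ((f ^ k) a₀) + dist ((f ^ k) a₀) ((f ^ k) b₀) +
          dist ((f ^ k) b₀) ((f ^ k) b)) := by
        gcongr
        exact dist_triangle4 _ _ _ _
    _ ≤ c + ξ + c := by
        rw [mul_add, mul_add]
        exact add_le_add (add_le_add (ha.pow_mul_dist_le hlam hmk)
          (h.pow_mul_dist_le (zero_le_one.trans hlam) h₀ hmk hkn))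
          (hb.symm.pow_mul_dist_le hlam hmk)

theorem rdiam_dPlusn_le_of_expAsymptotic [BoundedSpace M] (h : IsHyperbolic f ξ lam)
    (hlam : 1 ≤ lam) {δ : ℝ} (hδ : 0 ≤ δ) {m n : ℕ} (hm : c + ξ + c ≤ lam ^ m * δ)
    {V W U : Set M} (hV : rdiam (dPlusn f m) V ≤ δ) (hW : rdiam (dPlusn f.symm m) W ≤ δ)
    (hU : rdiam (dPlusn f n) U ≤ ξ) :
    rdiam (dPlusn f n)
      {x | x ∈ V ∩ (f ^ n) ⁻¹' W ∧ ∃ y ∈ U, ExpAsymptotic f lam c x y} ≤ δ := by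
  refine rdiam_dPlusn_le_s14 hδ ?_
  rintro a ⟨⟨haV, haW⟩, a₀, ha₀, haa₀⟩ b ⟨⟨hbV, hbW⟩, b₀, hb₀, hbb₀⟩ k hkn
  rcases le_or_gt k m with hkm | hmk
  · exact (dist_pow_le_rdiam_dPlusn haV hbV hkm).trans hV
  rcases le_or_gt n (k + m) with hnk | hkn'
  · have hlast := dist_pow_le_rdiam_dPlusn (f := f.symm) (n := m) (k := n - k)
      (Set.mem_preimage.1 haW) (Set.mem_preimage.1 hbW) (by lia)
    rw [symm_pow_sub_apply_pow f hkn, symm_pow_sub_apply_pow f hkn] at hlast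
    exact hlast.trans hW
  · have hmiddle := h.pow_mul_dist_le_of_expAsymptotic hlam haa₀ hbb₀
      (fun j hj => (dist_pow_le_rdiam_dPlusn ha₀ hb₀ hj).trans hU) hmk.le hkn'.le
    exact le_of_mul_le_mul_left (hmiddle.trans hm) (by positivity)

theorem exists_covN_le_mul_covN [CompactSpace M] (h : IsHyperbolic f ξ lam) (hf : Continuous f)
    (hf' : Continuous f.symm) (hξ : 0 < ξ) (hlam : 1 < lam) {X P : Set M}
    (hXP : ∀ x ∈ X, ∃ y ∈ P, ExpAsymptotic f lam c x y) :
    ∃ K : ℕ, ∀ n, covN X (dPlusn f n) ξ ≤ K * covN P (dPlusn f n) ξ := by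
  obtain ⟨m, hm⟩ := pow_unbounded_of_one_lt ((c + ξ + c) / (ξ / 2)) hlam
  obtain ⟨N, V, hVcover, hV⟩ := exists_coverableBy_dPlusn hf (half_pos hξ) m Set.univ
  obtain ⟨N', W, hWcover, hW⟩ := exists_coverableBy_dPlusn hf' (half_pos hξ) m Set.univ
  refine ⟨Fintype.card (Fin N × Fin N'), fun n => ?_⟩
  obtain ⟨_, hP⟩ := exists_coverableBy_dPlusn hf hξ n P
  refine (hP.coverableBy_covN.mul_of_shadow
    (fun ij : Fin N × Fin N' => V ij.1 ∩ (f ^ n) ⁻¹' W ij.2) ?_ _ hXP fun ij U hU => ?_).covN_le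
  · intro x _
    obtain ⟨i, hi⟩ := Set.mem_iUnion.1 (hVcover (Set.mem_univ x))
    obtain ⟨j, hj⟩ := Set.mem_iUnion.1 (hWcover (Set.mem_univ ((f ^ n) x)))
    exact Set.mem_iUnion.2 ⟨(i, j), hi, hj⟩
  · exact (h.rdiam_dPlusn_le_of_expAsymptotic hlam.le (half_pos hξ).le
      ((div_lt_iff₀ (half_pos hξ)).1 hm).le (hV ij.1).le (hW ij.2).le hU.le).trans_lt
      (half_lt_self hξ)

end IsHyperbolic

end Hyperbolic

section Entropy

theorem tendsto_log_div_iff_of_le_of_le_mul {a b : ℕ → ℝ} {K E : ℝ} (hb : ∀ n, 0 < b n)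
    (hba : ∀ n, b n ≤ a n) (hab : ∀ n, a n ≤ K * b n) :
    Tendsto (fun n : ℕ => Real.log (a n) / n) atTop (𝓝 E) ↔
      Tendsto (fun n : ℕ => Real.log (b n) / n) atTop (𝓝 E) := by
  have ha (n : ℕ) : 0 < a n := (hb n).trans_le (hba n)
  have hK : 0 < K := pos_of_mul_pos_left ((ha 0).trans_le (hab 0)) (hb 0).le
  refine tendsto_iff_of_dist (squeeze_zero (fun _ => dist_nonneg) (fun n => ?_)
    (tendsto_const_div_atTop_nhds_zero_nat (Real.log K)))
  have hlower : Real.log (b n) ≤ Real.log (a n) := Real.log_le_log (hb n) (hba n)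
  have hupper : Real.log (a n) ≤ Real.log K + Real.log (b n) := by
    rw [← Real.log_mul hK.ne' (hb n).ne']
    exact Real.log_le_log (ha n) (hab n)
  rw [Real.dist_eq, ← sub_div, abs_of_nonneg (div_nonneg (sub_nonneg.2 hlower) n.cast_nonneg)]
  gcongr
  linarith

variable {M : Type*} [MetricSpace M] [CompactSpace M] {f : Equiv.Perm M} {ξ lam c E : ℝ}

/-- The sequence `n ↦ log cov_ξ(X, d⁺ₙ) / n` whose limit is `ent⁺(X)`. Since `dMinusn f` unfolds to
`dPlusn f.symm`, the sequence for `ent⁻(X)` is `logCovRate f.symm ξ X`. -/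
noncomputable def logCovRate {M : Type*} [MetricSpace M] (f : Equiv.Perm M) (ξ : ℝ) (X : Set M)
    (n : ℕ) : ℝ :=
  Real.log (covN X (dPlusn f n) ξ : ℝ) / n

namespace IsHyperbolic

theorem tendsto_logCovRate_iff (h : IsHyperbolic f ξ lam) (hf : Continuous f)
    (hf' : Continuous f.symm) (hξ : 0 < ξ) (hlam : 1 < lam) {X P : Set M} (hPX : P ⊆ X)
    (hP : P.Nonempty) (hXP : ∀ x ∈ X, ∃ y ∈ P, ExpAsymptotic f lam c x y) :
    Tendsto (logCovRate f ξ X) atTop (𝓝 E) ↔ Tendsto (logCovRate f ξ P) atTop (𝓝 E) := by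
  obtain ⟨K, hK⟩ := h.exists_covN_le_mul_covN hf hf' hξ hlam hXP
  refine tendsto_log_div_iff_of_le_of_le_mul (K := K) (fun n => ?_) (fun n => ?_) fun n => ?_
  · obtain ⟨_, hcover⟩ := exists_coverableBy_dPlusn hf hξ n P
    exact_mod_cast hcover.coverableBy_covN.pos hP
  · obtain ⟨_, hcover⟩ := exists_coverableBy_dPlusn hf hξ n X
    exact_mod_cast (hcover.coverableBy_covN.mono hPX).covN_le
  · exact_mod_cast hK n

theorem tendsto_logCovRate_image2_iff (h : IsHyperbolic f ξ lam) (hf : Continuous f)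
    (hf' : Continuous f.symm) (hξ : 0 < ξ) (hlam : 1 < lam) {p x₀ : M} {S Y : Set M}
    {br : M → M → M} (hS : S ⊆ Ws f ξ p) (hx₀ : x₀ ∈ S) (hY : Y.Nonempty)
    (hbr : ∀ x ∈ S, ∀ y ∈ Y, br x y ∈ Ws f ξ x) :
    Tendsto (logCovRate f ξ (Set.image2 br S Y)) atTop (𝓝 E) ↔
      Tendsto (logCovRate f ξ (br x₀ '' Y)) atTop (𝓝 E) := by
  have hlam0 : 0 ≤ lam := zero_le_one.trans hlam.le
  refine h.tendsto_logCovRate_iff (c := ξ + ξ + (ξ + ξ)) hf hf' hξ hlam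
    (Set.image_subset_image2_right hx₀) (hY.image _) ?_
  rintro _ ⟨x, hx, y, hy, rfl⟩
  have hbase {x : M} (hx : x ∈ S) : ExpAsymptotic f lam (ξ + ξ) p (br x y) :=
    (h.expAsymptotic_of_mem_Ws hlam0 (hS hx)).trans hlam0
      (h.expAsymptotic_of_mem_Ws hlam0 (hbr x hx y hy))
  exact ⟨br x₀ y, Set.mem_image_of_mem _ hy, (hbase hx).symm.trans hlam0 (hbase hx₀)⟩

theorem tendsto_logCovRate_box_iff (h : IsHyperbolic f ξ lam) (hf : Continuous f)
    (hf' : Continuous f.symm) (hξ : 0 < ξ) (hlam : 1 < lam) {p x₀ : M} {r : ℝ} (hr : r ≤ ξ)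
    {br : M → M → M} (hx₀ : x₀ ∈ Ws f r p)
    (hbr : ∀ x ∈ Ws f r p, ∀ y ∈ Wu f r p, br x y ∈ Ws f ξ x) :
    Tendsto (logCovRate f ξ (Set.image2 br (Ws f r p) (Wu f r p))) atTop (𝓝 E) ↔
      Tendsto (logCovRate f ξ (br x₀ '' Wu f r p)) atTop (𝓝 E) := by
  have hp : p ∈ Wu f r p := fun n => by
    simpa only [dist_self] using dist_nonneg.trans (hx₀ 0)
  exact h.tendsto_logCovRate_image2_iff hf hf' hξ hlam (fun x hx n => (hx n).trans hr) hx₀ ⟨p, hp⟩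
    hbr

end IsHyperbolic

end Entropy

theorem stmt_14_general {M : Type*} [MetricSpace M] [CompactSpace M]
    (f : Equiv.Perm M) (hf : Continuous f) (hf' : Continuous f.symm)
    (ξ lam : ℝ) (hξ : 0 < ξ) (hlam : 1 < lam) (hyp : IsHyperbolic f ξ lam)
    (p : M) (r : ℝ) (hrξ : r ≤ ξ)
    (br : M → M → M)
    (hbr : ∀ x ∈ Ws f r p, ∀ y ∈ Wu f r p, br x y ∈ Ws f ξ x ∩ Wu f ξ y) :
    (∀ x₀ ∈ Ws f r p, ∀ E : ℝ,
      Tendsto (fun n : ℕ =>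
          Real.log ((covN {z | ∃ x ∈ Ws f r p, ∃ y ∈ Wu f r p, z = br x y}
            (dPlusn f n) ξ : ℕ) : ℝ) / (n : ℝ)) atTop (𝓝 E) ↔
      Tendsto (fun n : ℕ =>
          Real.log ((covN {z | ∃ y ∈ Wu f r p, z = br x₀ y}
            (dPlusn f n) ξ : ℕ) : ℝ) / (n : ℝ)) atTop (𝓝 E)) ∧
    (∀ y₀ ∈ Wu f r p, ∀ E : ℝ,
      Tendsto (fun n : ℕ =>
          Real.log ((covN {z | ∃ x ∈ Ws f r p, ∃ y ∈ Wu f r p, z = br x y}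
            (dMinusn f n) ξ : ℕ) : ℝ) / (n : ℝ)) atTop (𝓝 E) ↔
      Tendsto (fun n : ℕ =>
          Real.log ((covN {z | ∃ x ∈ Ws f r p, z = br x y₀}
            (dMinusn f n) ξ : ℕ) : ℝ) / (n : ℝ)) atTop (𝓝 E)) := by
  have hbox : {z | ∃ x ∈ Ws f r p, ∃ y ∈ Wu f r p, z = br x y} =
      Set.image2 br (Ws f r p) (Wu f r p) := by
    simp only [Set.image2, eq_comm]
  have hunstable (x₀ : M) : {z | ∃ y ∈ Wu f r p, z = br x₀ y} = br x₀ '' Wu f r p := by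
    simp only [Set.image, eq_comm]
  have hstable (y₀ : M) :
      {z | ∃ x ∈ Ws f r p, z = br x y₀} = (fun x => br x y₀) '' Ws f r p := by
    simp only [Set.image, eq_comm]
  refine ⟨fun x₀ hx₀ E => ?_, fun y₀ hy₀ E => ?_⟩
  · rw [hbox, hunstable]
    exact hyp.tendsto_logCovRate_box_iff hf hf' hξ hlam hrξ hx₀ fun x hx y hy => (hbr x hx y hy).1
  · rw [hbox, hstable, Set.image2_swap]
    exact hyp.symm.tendsto_logCovRate_box_iff hf' hf hξ hlam hrξ hy₀
      fun y hy x hx => (hbr x hx y hy).2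

theorem stmt_14 {M : Type*} [MetricSpace M] [CompactSpace M]
    (f : Equiv.Perm M) (hf : Continuous f) (hf' : Continuous f.symm)
    (ξ lam : ℝ) (hξ : 0 < ξ) (hlam : 1 < lam)
    (hexp : ∀ x y : M, x ≠ y → ∃ n : ℤ, 3 * ξ < dist ((f ^ n) x) ((f ^ n) y))
    (hss : ∀ p q : M, dist p q ≤ ξ →
      max (dist (f p) (f q)) (dist (f.symm p) (f.symm q)) = lam * dist p q)
    (hcc : ∀ ε > (0 : ℝ), ∃ δ > (0 : ℝ), ∀ x y : M, dist x y < δ → (Ws f ε x ∩ Wu f ε y).Nonempty)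
    (p : M) (r : ℝ) (hr0 : 0 < r) (hrξ : r < ξ)
    (br : M → M → M)
    (hbr : ∀ x ∈ Ws f r p, ∀ y ∈ Wu f r p, br x y ∈ Ws f ξ x ∩ Wu f ξ y) :
    (∀ x₀ ∈ Ws f r p, ∀ E : ℝ,
      Tendsto (fun n : ℕ =>
          Real.log ((covN {z | ∃ x ∈ Ws f r p, ∃ y ∈ Wu f r p, z = br x y}
            (dPlusn f n) ξ : ℕ) : ℝ) / (n : ℝ)) atTop (𝓝 E) ↔
      Tendsto (fun n : ℕ =>
          Real.log ((covN {z | ∃ y ∈ Wu f r p, z = br x₀ y}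
            (dPlusn f n) ξ : ℕ) : ℝ) / (n : ℝ)) atTop (𝓝 E)) ∧
    (∀ y₀ ∈ Wu f r p, ∀ E : ℝ,
      Tendsto (fun n : ℕ =>
          Real.log ((covN {z | ∃ x ∈ Ws f r p, ∃ y ∈ Wu f r p, z = br x y}
            (dMinusn f n) ξ : ℕ) : ℝ) / (n : ℝ)) atTop (𝓝 E) ↔
      Tendsto (fun n : ℕ =>
          Real.log ((covN {z | ∃ x ∈ Ws f r p, z = br x y₀}
            (dMinusn f n) ξ : ℕ) : ℝ) / (n : ℝ)) atTop (𝓝 E)) :=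
  stmt_14_general f hf hf' ξ lam hξ hlam (fun x y hxy => (hss x y hxy).ge) p r hrξ.le br hbr
end

section
/- Let h : (X₁, ρ₁) → (X₂, ρ₂) be a pseudo isometry between compact metric spaces. Then for every d > 0 the d-dimensional Hausdorff measures agree: μ^d(X₁, ρ₁) = μ^d(X₂, ρ₂). -/
open Filter Topology

open MeasureTheory

/-!
For every `K > 1`, a pseudo isometry and its inverse are `K`-Lipschitz near each point. A set of
finite Hausdorff measure is separable, hence covered by countably many neighbourhoods on which the
map is `K`-Lipschitz; cutting it into disjoint measurable pieces, the map multiplies its measure by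
at most `K ^ d`. A set of infinite measure trivially satisfies the same bound. Let `K` tend to `1`.
-/

open scoped NNReal ENNReal

section MeasureImage

variable {X Y : Type*} [MeasurableSpace X] [MeasurableSpace Y]

theorem measure_image_le_mul_of_subset_iUnion {μ : Measure X} {ν : Measure Y} {f : X → Y}
    {s : Set X} {c : ℝ≥0∞} {U : ℕ → Set X} (hU : ∀ n, MeasurableSet (U n)) (hsU : s ⊆ ⋃ n, U n)
    (hf : ∀ n, ∀ t ⊆ s ∩ U n, ν (f '' t) ≤ c * μ t) :
    ν (f '' s) ≤ c * μ s := by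
  have s_eq : s = ⋃ n, disjointed U n ∩ s := by
    rw [← Set.iUnion_inter, iUnion_disjointed, Set.inter_eq_right.2 hsU]
  have measure_s : μ s = ∑' n, μ (disjointed U n ∩ s) := by
    have hD : ∀ n, MeasurableSet (disjointed U n) := MeasurableSet.disjointed hU
    simp only [← Measure.restrict_apply (hD _)]
    rw [← measure_iUnion (disjoint_disjointed U) hD, iUnion_disjointed,
      Measure.restrict_apply (.iUnion hU), Set.inter_eq_right.2 hsU]
  calc ν (f '' s) = ν (⋃ n, f '' (disjointed U n ∩ s)) := by rw [← Set.image_iUnion, ← s_eq]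
    _ ≤ ∑' n, ν (f '' (disjointed U n ∩ s)) := measure_iUnion_le _
    _ ≤ ∑' n, c * μ (disjointed U n ∩ s) :=
        ENNReal.tsum_le_tsum fun n ↦ hf n _ fun _ hx ↦ ⟨hx.2, disjointed_subset U n hx.1⟩
    _ = c * μ s := by rw [ENNReal.tsum_mul_left, ← measure_s]

end MeasureImage

section HausdorffMeasure

variable {X Y : Type*} [EMetricSpace X] [MeasurableSpace X] [BorelSpace X]
  [EMetricSpace Y] [MeasurableSpace Y] [BorelSpace Y]
  {d : ℝ} {s : Set X} {f : X → Y} {K : ℝ≥0}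

theorem exists_cover_ediam_le_of_hausdorffMeasure_ne_top (hs : μH[d] s ≠ ∞) {r : ℝ≥0∞}
    (hr : 0 < r) : ∃ t : ℕ → Set X, s ⊆ ⋃ n, t n ∧ ∀ n, Metric.ediam (t n) ≤ r := by
  contrapose! hs
  rw [Measure.hausdorffMeasure_apply, eq_top_iff]
  refine le_iSup₂_of_le r hr (le_iInf fun t ↦ le_iInf₂ fun hst ht ↦ ?_)
  obtain ⟨n, hn⟩ := hs t hst
  exact absurd (ht n) hn.not_ge

theorem isSeparable_of_hausdorffMeasure_ne_top (hs : μH[d] s ≠ ∞) :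
    TopologicalSpace.IsSeparable s := by
  suffices ∀ ε > 0, ∃ c : Set X, c.Countable ∧ s ⊆ ⋃ x ∈ c, Metric.closedEBall x ε by
    obtain ⟨c, -, hc, hsc⟩ := EMetric.subset_countable_closure_of_almost_dense_set s this
    exact ⟨c, hc, hsc⟩
  intro ε hε
  obtain ⟨t, hst, ht⟩ := exists_cover_ediam_le_of_hausdorffMeasure_ne_top hs hε
  refine ⟨⋃ n, {x | ∃ h : (t n).Nonempty, h.some = x},
    Set.countable_iUnion fun n ↦ Set.Subsingleton.countable ?_, fun x hx ↦ ?_⟩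
  · rintro _ ⟨_, rfl⟩ _ ⟨_, rfl⟩
    rfl
  · obtain ⟨n, hn⟩ := Set.mem_iUnion.1 (hst hx)
    have hne : (t n).Nonempty := ⟨x, hn⟩
    exact Set.mem_biUnion (Set.mem_iUnion.2 ⟨n, hne, rfl⟩)
      ((Metric.edist_le_ediam_of_mem hn hne.some_mem).trans (ht n))

theorem hausdorffMeasure_image_le_of_isSeparable_of_locally_lipschitzOn
    (hs : TopologicalSpace.IsSeparable s)
    (hf : ∀ x ∈ s, ∃ t ∈ 𝓝[s] x, LipschitzOnWith K f t) (hd : 0 ≤ d) :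
    μH[d] (f '' s) ≤ (K : ℝ≥0∞) ^ d * μH[d] s := by
  have : SecondCountableTopology s := hs.secondCountableTopology
  have s_lindelof : IsLindelof s := .of_coe
  let LipschitzOpen := {u : Set X // IsOpen u ∧ LipschitzOnWith K f (s ∩ u)}
  have : Nonempty LipschitzOpen := ⟨∅, isOpen_empty, by simp⟩
  have s_subset : s ⊆ ⋃ u : LipschitzOpen, u := by
    intro x hx
    obtain ⟨t, ht, hft⟩ := hf x hx
    obtain ⟨u, hu, hxu, hut⟩ := mem_nhdsWithin.1 ht
    exact Set.mem_iUnion.2 ⟨⟨u, hu, hft.mono (Set.inter_comm s u ▸ hut)⟩, hxu⟩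
  obtain ⟨U, hsU⟩ := s_lindelof.indexed_countable_subcover _ (fun u ↦ u.2.1) s_subset
  exact measure_image_le_mul_of_subset_iUnion (fun n ↦ (U n).2.1.measurableSet) hsU
    fun n _ ht ↦ ((U n).2.2.mono ht).hausdorffMeasure_image_le hd

theorem hausdorffMeasure_image_le_of_locally_lipschitzOn (hK : K ≠ 0)
    (hf : ∀ x ∈ s, ∃ t ∈ 𝓝[s] x, LipschitzOnWith K f t) (hd : 0 ≤ d) :
    μH[d] (f '' s) ≤ (K : ℝ≥0∞) ^ d * μH[d] s := by
  rcases eq_or_ne (μH[d] s) ∞ with hs | hs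
  · have hKd : (K : ℝ≥0∞) ^ d ≠ 0 := by simp [ENNReal.rpow_eq_zero_iff, hK]
    simp [hs, ENNReal.mul_top hKd]
  · exact hausdorffMeasure_image_le_of_isSeparable_of_locally_lipschitzOn
      (isSeparable_of_hausdorffMeasure_ne_top hs) hf hd

theorem hausdorffMeasure_image_le_of_forall_one_lt_locally_lipschitzOn
    (hf : ∀ K : ℝ≥0, 1 < K → ∀ x ∈ s, ∃ t ∈ 𝓝[s] x, LipschitzOnWith K f t) (hd : 0 ≤ d) :
    μH[d] (f '' s) ≤ μH[d] s := by
  have tendsto_rpow : Tendsto (fun K : ℝ≥0 ↦ (K : ℝ≥0∞) ^ d) (𝓝[>] 1) (𝓝 1) := by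
    have hcont : Continuous fun K : ℝ≥0 ↦ (K : ℝ≥0∞) ^ d :=
      ENNReal.continuous_rpow_const.comp ENNReal.continuous_coe
    simpa using (hcont.tendsto 1).mono_left nhdsWithin_le_nhds
  have tendsto_bound :
      Tendsto (fun K : ℝ≥0 ↦ (K : ℝ≥0∞) ^ d * μH[d] s) (𝓝[>] 1) (𝓝 (μH[d] s)) := by
    simpa using ENNReal.Tendsto.mul_const tendsto_rpow (.inl one_ne_zero)
  exact ge_of_tendsto tendsto_bound <| eventually_nhdsWithin_of_forall fun K hK ↦
    hausdorffMeasure_image_le_of_locally_lipschitzOn (zero_lt_one.trans hK).ne' (hf K hK) hd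

end HausdorffMeasure

/-- The metric condition in the notion of pseudo isometry: distances are distorted by a factor
tending to `1`, uniformly, as they tend to `0`. That the map is a homeomorphism is not included. -/
def IsPseudoIsometry {X Y : Type*} [Dist X] [Dist Y] (f : X → Y) : Prop :=
  ∀ ε > (0 : ℝ), ∃ δ > (0 : ℝ), ∀ x y : X, 0 < dist x y → dist x y < δ →
    |dist (f x) (f y) / dist x y - 1| < ε

namespace IsPseudoIsometry

theorem exists_dist_le_mul {X Y : Type*} [MetricSpace X] [PseudoMetricSpace Y] {f : X → Y}
    (hf : IsPseudoIsometry f) {K : ℝ} (hK : 1 < K) :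
    ∃ δ > 0, ∀ x y, dist x y < δ →
      dist (f x) (f y) ≤ K * dist x y ∧ dist x y ≤ K * dist (f x) (f y) := by
  have hK0 : 0 < K := zero_lt_one.trans hK
  have upper : 1 + (1 - K⁻¹) ≤ K := by
    have : 0 ≤ (K - 1) ^ 2 / K := by positivity
    have : (K - 1) ^ 2 / K = K - (1 + (1 - K⁻¹)) := by field_simp; ring
    linarith
  obtain ⟨δ, hδ, hfδ⟩ := hf (1 - K⁻¹) (sub_pos.2 (inv_lt_one_of_one_lt₀ hK))
  refine ⟨δ, hδ, fun x y hxy ↦ ?_⟩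
  obtain rfl | hne := eq_or_ne x y
  · simp
  have hpos : 0 < dist x y := dist_pos.2 hne
  obtain ⟨hlow, hupp⟩ := abs_lt.1 (hfδ x y hpos hxy)
  constructor
  · exact (div_le_iff₀ hpos).1 (by linarith)
  · rw [← inv_mul_le_iff₀ hK0]
    exact (le_div_iff₀ hpos).1 (by linarith)

variable {X Y : Type*} [MetricSpace X]

theorem exists_mem_nhds_lipschitzOnWith [PseudoMetricSpace Y] {f : X → Y}
    (hf : IsPseudoIsometry f) {K : ℝ≥0} (hK : 1 < K) (x : X) :
    ∃ t ∈ 𝓝 x, LipschitzOnWith K f t := by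
  obtain ⟨δ, hδ, hfδ⟩ := hf.exists_dist_le_mul (K := K) (mod_cast hK)
  refine ⟨Metric.ball x (δ / 2), Metric.ball_mem_nhds x (half_pos hδ),
    .of_dist_le_mul fun y hy z hz ↦ (hfδ y z ?_).1⟩
  exact (dist_triangle_right y z x).trans_lt ((add_lt_add hy hz).trans_eq (add_halves δ))

theorem exists_mem_nhds_lipschitzOnWith_symm [PseudoMetricSpace Y] {h : X ≃ₜ Y}
    (hh : IsPseudoIsometry h) {K : ℝ≥0} (hK : 1 < K) (y : Y) :
    ∃ t ∈ 𝓝 y, LipschitzOnWith K h.symm t := by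
  obtain ⟨δ, hδ, hhδ⟩ := hh.exists_dist_le_mul (K := K) (mod_cast hK)
  refine ⟨h.symm ⁻¹' Metric.ball (h.symm y) (δ / 2),
    h.symm.continuous.continuousAt (Metric.ball_mem_nhds _ (half_pos hδ)),
    .of_dist_le_mul fun u hu v hv ↦ ?_⟩
  have huv : dist (h.symm u) (h.symm v) < δ :=
    (dist_triangle_right _ _ _).trans_lt ((add_lt_add hu hv).trans_eq (add_halves δ))
  simpa only [h.apply_symm_apply] using (hhδ _ _ huv).2

end IsPseudoIsometry

theorem stmt_17_general {X Y : Type*}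
    [MetricSpace X] [MeasurableSpace X] [BorelSpace X]
    [MetricSpace Y] [MeasurableSpace Y] [BorelSpace Y]
    {h : X ≃ₜ Y} (hh : IsPseudoIsometry h) {d : ℝ} (hd : 0 ≤ d) (s : Set X) :
    μH[d] (h '' s) = μH[d] s := by
  refine le_antisymm ?_ ?_
  · refine hausdorffMeasure_image_le_of_forall_one_lt_locally_lipschitzOn (fun K hK x _ ↦ ?_) hd
    obtain ⟨t, ht, hft⟩ := hh.exists_mem_nhds_lipschitzOnWith hK x
    exact ⟨t, mem_nhdsWithin_of_mem_nhds ht, hft⟩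
  · suffices μH[d] (h.symm '' (h '' s)) ≤ μH[d] (h '' s) by
      rwa [← Set.image_comp, h.symm_comp_self, Set.image_id] at this
    refine hausdorffMeasure_image_le_of_forall_one_lt_locally_lipschitzOn (fun K hK y _ ↦ ?_) hd
    obtain ⟨t, ht, hft⟩ := hh.exists_mem_nhds_lipschitzOnWith_symm hK y
    exact ⟨t, mem_nhdsWithin_of_mem_nhds ht, hft⟩

/-- a pseudo isometry between compact metric spaces preserves the
`d`-dimensional Hausdorff measure. -/
theorem stmt_17 {X₁ X₂ : Type*}
    [MetricSpace X₁] [CompactSpace X₁] [MeasurableSpace X₁] [BorelSpace X₁]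
    [MetricSpace X₂] [CompactSpace X₂] [MeasurableSpace X₂] [BorelSpace X₂]
    (h : X₁ ≃ₜ X₂)
    (hpi : ∀ ε > (0 : ℝ), ∃ δ > (0 : ℝ), ∀ x y : X₁, 0 < dist x y → dist x y < δ →
      |dist (h x) (h y) / dist x y - 1| < ε)
    (d : ℝ) (hd : 0 < d) :
    μH[d] (Set.univ : Set X₁) = μH[d] (Set.univ : Set X₂) := by
  rw [← stmt_17_general hpi hd.le, Set.image_univ_of_surjective h.surjective]
end

section
/- Let f be an expansive homeomorphism with canonical coordinates of a compact metric space (M,d), where 2ε₀ is an expansivity constant for some ε₀ > 0 and d is self-similar for f with expanding factor λ > 1. Then for all ε > 0 there is δ > 0 such that if 0 < d(x,y) < δ (so that the bracket [x,y] is defined), then |max{d(x,[x,y]), d([x,y],y)}/d(x,y) − 1| < ε; in particular d([x,y],x) ≤ (1+ε)·d(x,y) and d([x,y],y) ≤ (1+ε)·d(x,y). -/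
open Filter Topology

/-!
Put `z = [x, y]`. Self-similarity forces a pair that `f` expands once to keep expanding by exactly
`lam` as long as it stays `ξ`-close. Hence `f ^ n` multiplies `dist y z` by `lam ^ n`, divides
`dist x z` by `lam ^ n`, and multiplies `dist x y` by at most `lam ^ n`, with equality if `f` is the
map that expands the pair `(x, y)`. The triangle inequality between the `n`-th images, divided by
`lam ^ n`, compares `dist y z` with `dist x y` up to `dist x z / lam ^ (2 * n)`; exchanging `f` and
`f⁻¹` treats `dist x z`. Canonical coordinates at a small scale provide a second bracket of `x` and
`y`, equal to `z` by expansivity; so `z` is close to both points, and `n` can be taken large.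
-/

section SelfSimilar

variable {M : Type*} [PseudoMetricSpace M]

/-- The distance of `M` is self-similar for `f`, with expanding factor `lam` at scale `ξ`: of any
two `ξ`-close points, `f` and `f⁻¹` multiply the distance by at most `lam`, and one of them by
exactly `lam`. The conditions `0 < ξ` and `1 < lam` are kept separate. -/
def IsSelfSimilar (f : Equiv.Perm M) (ξ lam : ℝ) : Prop :=
  ∀ p q : M, dist p q ≤ ξ →
    max (dist (f p) (f q)) (dist (f.symm p) (f.symm q)) = lam * dist p q

namespace IsSelfSimilar

variable {f : Equiv.Perm M} {ξ lam : ℝ} {p q : M} {n : ℕ}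

theorem symm (h : IsSelfSimilar f ξ lam) : IsSelfSimilar f.symm ξ lam :=
  fun p q hpq => (max_comm _ _).trans (h p q hpq)

theorem dist_apply_le (h : IsSelfSimilar f ξ lam) (hpq : dist p q ≤ ξ) :
    dist (f p) (f q) ≤ lam * dist p q :=
  (le_max_left _ _).trans_eq (h p q hpq)

theorem dist_apply_eq_or_dist_symm_apply_eq (h : IsSelfSimilar f ξ lam) (hpq : dist p q ≤ ξ) :
    dist (f p) (f q) = lam * dist p q ∨ dist (f.symm p) (f.symm q) = lam * dist p q := by
  rw [← h p q hpq]
  exact (max_choice _ _).imp Eq.symm Eq.symm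

theorem dist_pow_le (h : IsSelfSimilar f ξ lam) (hlam : 1 ≤ lam) (hpq : lam ^ n * dist p q ≤ ξ) :
    dist ((f ^ n) p) ((f ^ n) q) ≤ lam ^ n * dist p q := by
  induction n with
  | zero => simp
  | succ n ih =>
    have hn : lam ^ n * dist p q ≤ ξ := le_trans (by gcongr; exact n.le_succ) hpq
    rw [pow_succ' f, Equiv.Perm.mul_apply, Equiv.Perm.mul_apply]
    calc dist (f ((f ^ n) p)) (f ((f ^ n) q))
        ≤ lam * dist ((f ^ n) p) ((f ^ n) q) := h.dist_apply_le ((ih hn).trans hn)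
      _ ≤ lam * (lam ^ n * dist p q) := by gcongr; exact ih hn
      _ = lam ^ (n + 1) * dist p q := by ring

-- If `f⁻¹` rather than `f` expanded the pair `(f p, f q)`, then
-- `dist p q = lam * dist (f p) (f q) = lam ^ 2 * dist p q`.
theorem dist_apply_apply (h : IsSelfSimilar f ξ lam) (hlam : 1 < lam)
    (hexpand : dist (f p) (f q) = lam * dist p q) (hclose : dist (f p) (f q) ≤ ξ) :
    dist (f (f p)) (f (f q)) = lam * dist (f p) (f q) := by
  refine (h.dist_apply_eq_or_dist_symm_apply_eq hclose).elim id fun hback => ?_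
  rw [Equiv.symm_apply_apply, Equiv.symm_apply_apply] at hback
  have hlam_sq : 1 < lam * lam := one_lt_mul_of_lt_of_le hlam hlam.le
  have hpq : dist p q = 0 := by
    refine (mul_eq_zero.1 ?_).resolve_left (sub_ne_zero.2 hlam_sq.ne')
    linear_combination -hback - lam * hexpand
  have hfpq : dist (f p) (f q) = 0 := by rw [hexpand, hpq, mul_zero]
  exact le_antisymm (h.dist_apply_le hclose) (by simp [hfpq])

theorem dist_pow_succ (h : IsSelfSimilar f ξ lam) (hlam : 1 < lam)
    (hexpand : dist (f p) (f q) = lam * dist p q)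
    (hclose : ∀ k ≤ n, dist ((f ^ k) p) ((f ^ k) q) ≤ ξ) :
    dist ((f ^ (n + 1)) p) ((f ^ (n + 1)) q) = lam * dist ((f ^ n) p) ((f ^ n) q) := by
  induction n with
  | zero => simpa using hexpand
  | succ n ih =>
    have ih := ih fun k hk => hclose k (hk.trans n.le_succ)
    have hn := hclose (n + 1) le_rfl
    simp only [pow_succ' f, Equiv.Perm.mul_apply] at ih hn ⊢
    exact h.dist_apply_apply hlam ih hn

theorem dist_pow (h : IsSelfSimilar f ξ lam) (hlam : 1 < lam)
    (hexpand : dist (f p) (f q) = lam * dist p q)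
    (hclose : ∀ k < n, dist ((f ^ k) p) ((f ^ k) q) ≤ ξ) :
    dist ((f ^ n) p) ((f ^ n) q) = lam ^ n * dist p q := by
  induction n with
  | zero => simp
  | succ n ih =>
    rw [h.dist_pow_succ hlam hexpand fun k hk => hclose k (Nat.lt_succ_of_le hk),
      ih fun k hk => hclose k (hk.trans n.lt_succ_self), pow_succ', mul_assoc]

theorem dist_pow_of_pow_mul_dist_le (h : IsSelfSimilar f ξ lam) (hlam : 1 < lam)
    (hexpand : dist (f p) (f q) = lam * dist p q) (hpq : lam ^ n * dist p q ≤ ξ) :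
    dist ((f ^ n) p) ((f ^ n) q) = lam ^ n * dist p q := by
  refine h.dist_pow hlam hexpand fun k hk => ?_
  have hk' : lam ^ k * dist p q ≤ ξ := le_trans (by gcongr; exact hlam.le) hpq
  exact (h.dist_pow_le hlam.le hk').trans hk'

end IsSelfSimilar

end SelfSimilar

section LocalSets

variable {M : Type*} [MetricSpace M] {f : Equiv.Perm M} {x y z : M} {ε ε' : ℝ}

theorem Ws_mono (hε : ε ≤ ε') : Ws f ε x ⊆ Ws f ε' x :=
  fun _ hz n => (hz n).trans hε

theorem Wu_mono (hε : ε ≤ ε') : Wu f ε x ⊆ Wu f ε' x :=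
  Ws_mono (f := f.symm) hε

theorem dist_le_of_mem_Ws (hz : z ∈ Ws f ε x) : dist x z ≤ ε := hz 0

theorem dist_le_of_mem_Wu (hz : z ∈ Wu f ε x) : dist x z ≤ ε := hz 0

theorem pow_apply_mem_Ws (hz : z ∈ Ws f ε x) (n : ℕ) : (f ^ n) z ∈ Ws f ε ((f ^ n) x) := by
  intro k
  simpa only [← Equiv.Perm.mul_apply, ← pow_add] using hz (k + n)

/-- `c` is an expansivity constant of `f`: distinct points are separated by more than `c` at some
time. -/
def IsExpansivityConstant (f : Equiv.Perm M) (c : ℝ) : Prop :=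
  ∀ x y : M, x ≠ y → ∃ n : ℤ, c < dist ((f ^ n) x) ((f ^ n) y)

/-- `f` has canonical coordinates: local stable and unstable sets of sufficiently close points
intersect. -/
def HasCanonicalCoordinates (f : Equiv.Perm M) : Prop :=
  ∀ ε > (0 : ℝ), ∃ δ > (0 : ℝ), ∀ x y : M, dist x y < δ → (Ws f ε x ∩ Wu f ε y).Nonempty

theorem IsExpansivityConstant.subsingleton_Ws_inter_Wu (hexp : IsExpansivityConstant f (2 * ε)) :
    (Ws f ε x ∩ Wu f ε y).Subsingleton := by
  intro z hz w hw
  by_contra hne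
  obtain ⟨n, hn⟩ := hexp z w hne
  refine hn.not_ge ?_
  rw [two_mul]
  obtain ⟨k, rfl | rfl⟩ := n.eq_nat_or_neg
  · rw [zpow_natCast]
    exact (dist_triangle_left _ _ ((f ^ k) x)).trans (add_le_add (hz.1 k) (hw.1 k))
  · rw [zpow_neg, zpow_natCast, ← inv_pow]
    exact (dist_triangle_left _ _ ((f⁻¹ ^ k) y)).trans (add_le_add (hz.2 k) (hw.2 k))

theorem HasCanonicalCoordinates.exists_bracket_mem {ε₀ δ₀ η : ℝ} {br : M → M → M}
    (hcc : HasCanonicalCoordinates f) (hexp : IsExpansivityConstant f (2 * ε₀)) (hε₀ : 0 < ε₀)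
    (hδ₀ : 0 < δ₀) (hbr : ∀ x y : M, dist x y < δ₀ → br x y ∈ Ws f ε₀ x ∩ Wu f ε₀ y)
    (hη : 0 < η) :
    ∃ δ > 0, ∀ x y : M, dist x y < δ → br x y ∈ Ws f η x ∩ Wu f η y := by
  obtain ⟨δ₁, hδ₁, hne⟩ := hcc (min ε₀ η) (lt_min hε₀ hη)
  refine ⟨min δ₀ δ₁, lt_min hδ₀ hδ₁, fun x y hxy => ?_⟩
  obtain ⟨w, hws, hwu⟩ := hne x y (hxy.trans_le (min_le_right _ _))
  have hbr_eq : br x y = w :=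
    hexp.subsingleton_Ws_inter_Wu (hbr x y (hxy.trans_le (min_le_left _ _)))
      ⟨Ws_mono (min_le_left _ _) hws, Wu_mono (min_le_left _ _) hwu⟩
  rw [hbr_eq]
  exact ⟨Ws_mono (min_le_right _ _) hws, Wu_mono (min_le_right _ _) hwu⟩

end LocalSets

namespace IsSelfSimilar

variable {M : Type*} [MetricSpace M] {f : Equiv.Perm M} {ξ lam η : ℝ} {x y z : M} {n : ℕ}

-- Otherwise `f` expands the pair, whose forward orbit then grows exponentially.
theorem dist_symm_apply_of_mem_Ws (h : IsSelfSimilar f ξ lam) (hlam : 1 < lam)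
    (hz : z ∈ Ws f ξ x) : dist (f.symm x) (f.symm z) = lam * dist x z := by
  rcases eq_or_ne x z with rfl | hxz
  · simp
  refine (h.dist_apply_eq_or_dist_symm_apply_eq (dist_le_of_mem_Ws hz)).resolve_left
    fun hexpand => ?_
  obtain ⟨n, hn⟩ := pow_unbounded_of_one_lt (ξ / dist x z) hlam
  rw [div_lt_iff₀ (dist_pos.2 hxz), ← h.dist_pow hlam hexpand fun k _ => hz k] at hn
  exact (hz n).not_gt hn

theorem dist_apply_of_mem_Wu (h : IsSelfSimilar f ξ lam) (hlam : 1 < lam)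
    (hz : z ∈ Wu f ξ x) : dist (f x) (f z) = lam * dist x z :=
  h.symm.dist_symm_apply_of_mem_Ws hlam hz

theorem dist_pow_of_mem_Ws (h : IsSelfSimilar f ξ lam) (hlam : 1 < lam) (hz : z ∈ Ws f ξ x)
    (n : ℕ) : dist ((f ^ n) x) ((f ^ n) z) = dist x z / lam ^ n := by
  have hlam₀ : lam ≠ 0 := (zero_lt_one.trans hlam).ne'
  induction n with
  | zero => simp
  | succ n ih =>
    have hback := h.dist_symm_apply_of_mem_Ws hlam (pow_apply_mem_Ws hz (n + 1))
    simp only [pow_succ' f, Equiv.Perm.mul_apply, Equiv.symm_apply_apply] at hback ⊢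
    rw [pow_succ, ← div_div, ← ih, hback, mul_div_cancel_left₀ _ hlam₀]

theorem dist_unstable_le_add (h : IsSelfSimilar f ξ lam) (hlam : 1 < lam)
    (hs : z ∈ Ws f ξ x) (hu : z ∈ Wu f ξ y)
    (hyz : lam ^ n * dist y z ≤ ξ) (hxy : lam ^ n * dist x y ≤ ξ) :
    dist y z ≤ dist x y + dist x z / lam ^ (2 * n) := by
  have hpow : 0 < lam ^ n := pow_pos (zero_lt_one.trans hlam) n
  refine le_of_mul_le_mul_left ?_ hpow
  calc lam ^ n * dist y z
      = dist ((f ^ n) y) ((f ^ n) z) :=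
        (h.dist_pow_of_pow_mul_dist_le hlam (h.dist_apply_of_mem_Wu hlam hu) hyz).symm
    _ ≤ dist ((f ^ n) x) ((f ^ n) y) + dist ((f ^ n) x) ((f ^ n) z) := dist_triangle_left _ _ _
    _ ≤ lam ^ n * dist x y + dist x z / lam ^ n :=
        add_le_add (h.dist_pow_le hlam.le hxy) (h.dist_pow_of_mem_Ws hlam hs n).le
    _ = lam ^ n * (dist x y + dist x z / lam ^ (2 * n)) := by
        rw [two_mul, pow_add]; field_simp

theorem le_dist_unstable_add (h : IsSelfSimilar f ξ lam) (hlam : 1 < lam)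
    (hs : z ∈ Ws f ξ x) (hu : z ∈ Wu f ξ y)
    (hyz : lam ^ n * dist y z ≤ ξ) (hxy : lam ^ n * dist x y ≤ ξ)
    (hexpand : dist (f x) (f y) = lam * dist x y) :
    dist x y ≤ dist y z + dist x z / lam ^ (2 * n) := by
  have hpow : 0 < lam ^ n := pow_pos (zero_lt_one.trans hlam) n
  refine le_of_mul_le_mul_left ?_ hpow
  calc lam ^ n * dist x y
      = dist ((f ^ n) x) ((f ^ n) y) := (h.dist_pow_of_pow_mul_dist_le hlam hexpand hxy).symm
    _ ≤ dist ((f ^ n) x) ((f ^ n) z) + dist ((f ^ n) y) ((f ^ n) z) := dist_triangle_right _ _ _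
    _ = dist x z / lam ^ n + lam ^ n * dist y z := by
        rw [h.dist_pow_of_mem_Ws hlam hs,
          h.dist_pow_of_pow_mul_dist_le hlam (h.dist_apply_of_mem_Wu hlam hu) hyz]
    _ = lam ^ n * (dist y z + dist x z / lam ^ (2 * n)) := by
        rw [two_mul, pow_add]; field_simp; ring

theorem abs_max_dist_sub_dist_le_of_pow_mul_dist_le (h : IsSelfSimilar f ξ lam) (hlam : 1 < lam)
    (hs : z ∈ Ws f ξ x) (hu : z ∈ Wu f ξ y) (hxz : lam ^ n * dist x z ≤ ξ)
    (hyz : lam ^ n * dist y z ≤ ξ) (hxy : lam ^ n * dist x y ≤ ξ) :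
    |max (dist x z) (dist y z) - dist x y| ≤ max (dist x z) (dist y z) / lam ^ (2 * n) := by
  have hyx : lam ^ n * dist y x ≤ ξ := by rwa [dist_comm]
  have hclose : dist x y ≤ ξ :=
    (le_mul_of_one_le_left dist_nonneg (one_le_pow₀ hlam.le)).trans hxy
  set m := max (dist x z) (dist y z)
  have hxm : dist x z / lam ^ (2 * n) ≤ m / lam ^ (2 * n) := by gcongr; exact le_max_left _ _
  have hym : dist y z / lam ^ (2 * n) ≤ m / lam ^ (2 * n) := by gcongr; exact le_max_right _ _
  have upper : m ≤ dist x y + m / lam ^ (2 * n) := by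
    have hstable := h.symm.dist_unstable_le_add hlam hu hs hxz hyx
    have hunstable := h.dist_unstable_le_add hlam hs hu hyz hxy
    rw [dist_comm y x] at hstable
    exact max_le (by linarith) (by linarith)
  have lower : dist x y ≤ m + m / lam ^ (2 * n) := by
    rcases h.dist_apply_eq_or_dist_symm_apply_eq hclose with hexpand | hexpand
    · exact (h.le_dist_unstable_add hlam hs hu hyz hxy hexpand).trans
        (add_le_add (le_max_right _ _) hxm)
    · rw [dist_comm (f.symm x), dist_comm x y] at hexpand
      rw [dist_comm x y]
      exact (h.symm.le_dist_unstable_add hlam hu hs hxz hyx hexpand).trans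
        (add_le_add (le_max_left _ _) hym)
  exact abs_sub_le_iff.2 ⟨by linarith, by linarith⟩

theorem abs_max_dist_sub_dist_le (h : IsSelfSimilar f ξ lam) (hlam : 1 < lam)
    (hz : z ∈ Ws f η x ∩ Wu f η y) (hη : lam ^ n * (2 * η) ≤ ξ) :
    |max (dist x z) (dist z y) - dist x y| ≤ max (dist x z) (dist z y) / lam ^ (2 * n) := by
  have hxz : dist x z ≤ η := dist_le_of_mem_Ws hz.1
  have hyz : dist y z ≤ η := dist_le_of_mem_Wu hz.2
  have hη₀ : 0 ≤ η := dist_nonneg.trans hxz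
  have hη_two : η ≤ 2 * η := le_mul_of_one_le_left hη₀ one_le_two
  have hxy : dist x y ≤ 2 * η := by linarith [dist_triangle_right x y z]
  have hηξ : η ≤ ξ :=
    hη_two.trans ((le_mul_of_one_le_left (hη₀.trans hη_two) (one_le_pow₀ hlam.le)).trans hη)
  have scale {r : ℝ} (hr : r ≤ 2 * η) : lam ^ n * r ≤ ξ := le_trans (by gcongr) hη
  rw [dist_comm z y]
  exact h.abs_max_dist_sub_dist_le_of_pow_mul_dist_le hlam (Ws_mono hηξ hz.1) (Wu_mono hηξ hz.2)
    (scale (hxz.trans hη_two)) (scale (hyz.trans hη_two)) (scale hxy)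

end IsSelfSimilar

theorem abs_div_sub_one_lt_of_abs_sub_le_div {m d K ε : ℝ} (hd : 0 < d) (hε : 0 < ε)
    (hK : (1 + ε) / ε < K) (h : |m - d| ≤ m / K) : |m / d - 1| < ε := by
  have hK₀ : 0 < K := lt_trans (by positivity) hK
  rw [div_lt_iff₀ hε] at hK
  rw [le_div_iff₀ hK₀] at h
  rw [div_sub_one hd.ne', abs_div, abs_of_pos hd, div_lt_iff₀ hd]
  have hK₁ : (K - 1) * |m - d| ≤ d := by linarith [le_abs_self (m - d)]
  have hεK : 1 < (K - 1) * ε := by linarith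
  have hK_sub : 0 ≤ K - 1 := nonneg_of_mul_nonneg_left (zero_le_one.trans hεK.le) hε
  refine lt_of_mul_lt_mul_left (hK₁.trans_lt ?_) hK_sub
  rw [← mul_assoc]
  exact lt_mul_of_one_lt_left hd hεK

theorem stmt_18_general {M : Type*} [MetricSpace M] {f : Equiv.Perm M} {ε₀ ξ lam δ₀ : ℝ}
    (hε₀ : 0 < ε₀) (hexp : IsExpansivityConstant f (2 * ε₀)) (hξ : 0 < ξ) (hlam : 1 < lam)
    (hss : IsSelfSimilar f ξ lam) (hcc : HasCanonicalCoordinates f) (hδ₀ : 0 < δ₀)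
    {br : M → M → M} (hbr : ∀ x y : M, dist x y < δ₀ → br x y ∈ Ws f ε₀ x ∩ Wu f ε₀ y) :
    ∀ ε > (0 : ℝ), ∃ δ > (0 : ℝ), ∀ x y : M, 0 < dist x y → dist x y < δ →
      |max (dist x (br x y)) (dist (br x y) y) / dist x y - 1| < ε ∧
      dist (br x y) x ≤ (1 + ε) * dist x y ∧
      dist (br x y) y ≤ (1 + ε) * dist x y := by
  intro ε hε
  obtain ⟨n, hn⟩ := pow_unbounded_of_one_lt ((1 + ε) / ε) (one_lt_pow₀ hlam two_ne_zero)
  rw [← pow_mul] at hn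
  have hpow : 0 < lam ^ n := pow_pos (zero_lt_one.trans hlam) n
  have hscale : lam ^ n * (2 * (ξ / (2 * lam ^ n))) ≤ ξ := by field_simp; rfl
  obtain ⟨δ, hδ, hmem⟩ := hcc.exists_bracket_mem hexp hε₀ hδ₀ hbr
    (div_pos hξ (mul_pos two_pos hpow))
  refine ⟨δ, hδ, fun x y hxy hxyδ => ?_⟩
  have hratio := abs_div_sub_one_lt_of_abs_sub_le_div hxy hε hn
    (hss.abs_max_dist_sub_dist_le hlam (hmem x y hxyδ) hscale)
  have hmax : max (dist x (br x y)) (dist (br x y) y) ≤ (1 + ε) * dist x y :=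
    (div_le_iff₀ hxy).1 (by linarith [(abs_lt.1 hratio).2])
  exact ⟨hratio, dist_comm x (br x y) ▸ (le_max_left _ _).trans hmax,
    (le_max_right _ _).trans hmax⟩

theorem stmt_18 {M : Type*} [MetricSpace M] [CompactSpace M]
    (f : Equiv.Perm M) (hf : Continuous f) (hf' : Continuous f.symm)
    (ε₀ : ℝ) (hε₀ : 0 < ε₀)
    (hexp : ∀ x y : M, x ≠ y → ∃ n : ℤ, 2 * ε₀ < dist ((f ^ n) x) ((f ^ n) y))
    (ξ lam : ℝ) (hξ : 0 < ξ) (hlam : 1 < lam)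
    (hss : ∀ p q : M, dist p q ≤ ξ →
      max (dist (f p) (f q)) (dist (f.symm p) (f.symm q)) = lam * dist p q)
    (hcc : ∀ ε > (0 : ℝ), ∃ δ > (0 : ℝ), ∀ x y : M, dist x y < δ → (Ws f ε x ∩ Wu f ε y).Nonempty)
    (δ₀ : ℝ) (hδ₀ : 0 < δ₀)
    (br : M → M → M)
    (hbr : ∀ x y : M, dist x y < δ₀ → br x y ∈ Ws f ε₀ x ∩ Wu f ε₀ y) :
    ∀ ε > (0 : ℝ), ∃ δ > (0 : ℝ), ∀ x y : M, 0 < dist x y → dist x y < δ →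
      |max (dist x (br x y)) (dist (br x y) y) / dist x y - 1| < ε ∧
      dist (br x y) x ≤ (1 + ε) * dist x y ∧
      dist (br x y) y ≤ (1 + ε) * dist x y :=
  stmt_18_general hε₀ hexp hξ hlam hss hcc hδ₀ hbr
end
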